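/- arXiv:1810.04949 — 5 statements merged into one kernel-verified Lean document; each statement's English description precedes it below -/
import Mathlib

section
/- There exists a positive constant c (depending on d, α, ν) such that for all t > 0 and all R > 0: ∫_{B(0,R)^c} p_t(y) dy ≤ c t / R^{α}. -/
open MeasureTheory Real
open scoped RealInnerProductSpace

/-- The heat kernel of the fractional Laplacian `-ν(-Δ)^(α/2)` on `ℝ^d`:
`p_t(x) = (2π)^{-d} ∫ e^{-i x·z} e^{-tν|z|^α} dz`. -/
noncomputable def stableKernel (d : ℕ) (ν α t : ℝ) (x : EuclideanSpace ℝ (Fin d)) : ℝ :=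
  ((2 * Real.pi) ^ d)⁻¹ *
    (∫ z : EuclideanSpace ℝ (Fin d),
      Complex.exp (-(Complex.I * (⟪x, z⟫ : ℝ))) *
        Complex.exp (-((t * ν * ‖z‖ ^ α : ℝ) : ℂ))).re

/-!
Up to the factor `(2π)^{-d}`, the kernel is the Fourier transform `q` of `φ(z) = exp(-a|z|^α)` with
`a = tν`. Off the ball of radius `R`, `1 - e⁻¹ ≤ 1 - g` for the Gaussian `g(x) = exp(-|x|²/R²)`, so
the tail of `q` is at most a constant times `∫ q (1 - g)`. Since `q ≥ 0`, damping `q` by wide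
Gaussians and Fatou's lemma bound its total mass by `(2π)^d`. Moving the Fourier transform onto the
Gaussian then gives `∫ q (1 - g) ≤ ∫ (1 - φ) ĝ ≤ a ∫ |z|^α ĝ`, which scales like `a / R^α`.

Positivity of `q` is subordination. For `α < 2`, `a u^(α/2)` is the Laplace exponent `ψ` of a
subordinator; discarding the small jumps gives `ψₙ` such that `(1 - ψₙ/n)ⁿ` is the Laplace transform
of a finite measure, and these converge to `e^{-ψ}`. Laplace transforms at `|z|²` are mixtures of
Gaussians in `z`, whose Fourier transforms are nonnegative.
-/

open Filter Topology
open scoped NNReal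

theorem exp_neg_mul_sq_le_one {b : ℝ} (hb : 0 ≤ b) (r : ℝ) : exp (-b * r ^ 2) ≤ 1 :=
  exp_le_one_iff.2 (by rw [neg_mul, neg_nonpos]; positivity)

theorem tendsto_exp_neg_one_div_mul_sq (r : ℝ) :
    Tendsto (fun n : ℕ => exp (-(1 / ((n : ℝ) + 1)) * r ^ 2)) atTop (𝓝 1) := by
  have := (tendsto_one_div_add_atTop_nhds_zero_nat (𝕜 := ℝ)).neg.mul_const (r ^ 2)
  simpa [Function.comp_def] using (continuous_exp.tendsto _).comp this

theorem one_sub_exp_neg_one_le {R r : ℝ} (hR : 0 < R) (hr : R ≤ r) :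
    1 - exp (-1) ≤ 1 - exp (-(R ^ 2)⁻¹ * r ^ 2) := by
  have hone : 1 ≤ (R ^ 2)⁻¹ * r ^ 2 := by
    rw [inv_mul_eq_div, one_le_div (by positivity)]
    gcongr
  gcongr
  linarith

variable {V : Type*} [NormedAddCommGroup V] [InnerProductSpace ℝ V] [FiniteDimensional ℝ V]
  [MeasurableSpace V] [BorelSpace V]

/-- The Fourier cosine transform on a Euclidean space, in the angular-frequency convention (no `2π`
in the phase). It is the real part of the Fourier transform of `f`, hence the whole of it when `f`
is even. -/
noncomputable def cosTransform (f : V → ℝ) (x : V) : ℝ :=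
  ∫ z, cos ⟪x, z⟫ * f z

theorem integrable_cos_inner_mul {f : V → ℝ} (hf : Integrable f) (x : V) :
    Integrable fun z => cos ⟪x, z⟫ * f z :=
  hf.bdd_mul (c := 1) (by fun_prop) (.of_forall fun _ => abs_cos_le_one _)

theorem continuous_cosTransform {f : V → ℝ} (hf : Integrable f) :
    Continuous (cosTransform f) :=
  continuous_of_dominated (fun x => (integrable_cos_inner_mul hf x).1)
    (fun x => .of_forall fun _ => norm_mul_le_of_le (abs_cos_le_one _) le_rfl)
    (by simpa using hf.norm) (.of_forall fun _ => by fun_prop)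

theorem norm_cosTransform_le {f : V → ℝ} (hf : Integrable f) (x : V) :
    ‖cosTransform f x‖ ≤ ∫ z, ‖f z‖ :=
  norm_integral_le_of_norm_le hf.norm <| .of_forall fun _ =>
    (norm_mul_le_of_le (abs_cos_le_one _) le_rfl).trans_eq (one_mul _)

theorem integrable_mul_cosTransform {f g : V → ℝ} (hf : Integrable f) (hg : Integrable g) :
    Integrable fun z => f z * cosTransform g z :=
  hf.mul_bdd (continuous_cosTransform hg).aestronglyMeasurable
    (.of_forall (norm_cosTransform_le hg))

theorem cosTransform_eq_re {f : V → ℝ} (hf : Integrable f) (x : V) :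
    cosTransform f x = (∫ z, Complex.exp (-(Complex.I * (⟪x, z⟫ : ℝ))) * (f z : ℂ)).re := by
  have hint : Integrable fun z => Complex.exp (-(Complex.I * (⟪x, z⟫ : ℝ))) * (f z : ℂ) :=
    hf.ofReal.bdd_mul (c := 1) (by fun_prop) (.of_forall fun _ => by simp [Complex.norm_exp])
  rw [← RCLike.re_to_complex, ← integral_re hint]
  simp [cosTransform, Complex.exp_re, Complex.exp_im]

theorem integral_cosTransform_mul {f g : V → ℝ} (hf : Integrable f) (hg : Integrable g) :
    ∫ x, cosTransform f x * g x = ∫ z, f z * cosTransform g z := by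
  have hswap := integral_integral_swap (f := fun x z : V => cos ⟪x, z⟫ * f z * g x) <| by
    refine ((hg.mul_prod hf).bdd_mul (f := fun p : V × V => cos ⟪p.1, p.2⟫) (c := 1)
      (by fun_prop) (.of_forall fun p => abs_cos_le_one _)).congr (.of_forall fun p => ?_)
    simp only [Function.uncurry]
    ring
  simp only [cosTransform, ← integral_mul_const, ← integral_const_mul, hswap]
  simp only [real_inner_comm, mul_left_comm, mul_assoc]

theorem tendsto_cosTransform_of_dominated {f : V → ℝ} {F : ℕ → V → ℝ} {bound : V → ℝ}
    (hF : ∀ n, AEStronglyMeasurable (F n)) (hbound : Integrable bound)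
    (hle : ∀ᶠ n in atTop, ∀ z, ‖F n z‖ ≤ bound z)
    (hlim : ∀ z, Tendsto (fun n => F n z) atTop (𝓝 (f z))) (x : V) :
    Tendsto (fun n => cosTransform (F n) x) atTop (𝓝 (cosTransform f x)) := by
  refine tendsto_integral_filter_of_dominated_convergence bound
    (.of_forall fun n => (by fun_prop : Continuous fun z => cos ⟪x, z⟫).aestronglyMeasurable.mul
      (hF n)) (hle.mono fun n hn => .of_forall fun z => ?_) hbound
    (.of_forall fun z => (hlim z).const_mul _)
  simpa using norm_mul_le_of_le (abs_cos_le_one ⟪x, z⟫) (hn z)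

theorem cosTransform_comp_smul (f : V → ℝ) {r : ℝ} (hr : 0 < r) (x : V) :
    cosTransform (fun z => f (r • z)) x
      = (r ^ Module.finrank ℝ V)⁻¹ * cosTransform f (r⁻¹ • x) := by
  have h := Measure.integral_comp_smul_of_nonneg (volume : Measure V)
    (fun w => cos ⟪r⁻¹ • x, w⟫ * f w) r (hR := hr.le)
  simpa [cosTransform, inner_smul_left, inner_smul_right, hr.ne'] using h

theorem integrable_exp_neg_mul_sq_norm {b : ℝ} (hb : 0 < b) :
    Integrable fun z : V => exp (-b * ‖z‖ ^ 2) := by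
  refine .of_integral_ne_zero ?_
  rw [GaussianFourier.integral_rexp_neg_mul_sq_norm hb]
  positivity

theorem cosTransform_gaussian {b : ℝ} (hb : 0 < b) (x : V) :
    cosTransform (fun z => exp (-b * ‖z‖ ^ 2)) x
      = (π / b) ^ (Module.finrank ℝ V / 2 : ℝ) * exp (-(1 / (4 * b)) * ‖x‖ ^ 2) := by
  have hcomplex := GaussianFourier.integral_cexp_neg_mul_sq_norm_add (V := V) (b := b)
    (by simpa using hb) (-Complex.I) x
  have hreal : (π / b : ℂ) ^ (Module.finrank ℝ V / 2 : ℂ)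
        * Complex.exp ((-Complex.I) ^ 2 * ‖x‖ ^ 2 / (4 * b))
      = ((π / b) ^ (Module.finrank ℝ V / 2 : ℝ) * exp (-(1 / (4 * b)) * ‖x‖ ^ 2) : ℝ) := by
    rw [Complex.ofReal_mul, Complex.ofReal_cpow (by positivity), neg_sq, Complex.I_sq]
    push_cast
    ring_nf
  rw [cosTransform_eq_re (integrable_exp_neg_mul_sq_norm hb), ← Complex.ofReal_re (_ * _), ← hreal,
    ← hcomplex]
  congr 2 with z
  rw [Complex.ofReal_exp, ← Complex.exp_add]
  push_cast
  ring_nf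

theorem cosTransform_gaussian_nonneg {b : ℝ} (hb : 0 < b) (x : V) :
    0 ≤ cosTransform (fun z => exp (-b * ‖z‖ ^ 2)) x := by
  rw [cosTransform_gaussian hb]
  positivity

theorem integrable_cosTransform_gaussian {b : ℝ} (hb : 0 < b) :
    Integrable (cosTransform fun z : V => exp (-b * ‖z‖ ^ 2)) := by
  rw [funext (cosTransform_gaussian hb)]
  exact (integrable_exp_neg_mul_sq_norm (by positivity)).const_mul _

theorem integral_cosTransform_gaussian {b : ℝ} (hb : 0 < b) :
    ∫ z : V, cosTransform (fun w => exp (-b * ‖w‖ ^ 2)) z = (2 * π) ^ Module.finrank ℝ V := by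
  simp only [cosTransform_gaussian hb]
  rw [integral_const_mul, GaussianFourier.integral_rexp_neg_mul_sq_norm (by positivity),
    ← mul_rpow (by positivity) (by positivity),
    show π / b * (π / (1 / (4 * b))) = (2 * π) ^ (2 : ℝ) by norm_cast; field_simp; ring,
    ← rpow_mul (by positivity), mul_div_cancel₀ _ two_ne_zero, rpow_natCast]

/-- `h` agrees on `[0, ∞)` with the Laplace transform of a finite measure on `[0, ∞)`. -/
def IsLaplaceTransform (h : ℝ → ℝ) : Prop :=
  ∃ P : Measure ℝ≥0, IsFiniteMeasure P ∧ ∀ u, 0 ≤ u → h u = ∫ s : ℝ≥0, exp (-s * u) ∂P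

theorem integrable_exp_neg_mul {P : Measure ℝ≥0} [IsFiniteMeasure P] {u : ℝ} (hu : 0 ≤ u) :
    Integrable (fun s : ℝ≥0 => exp (-s * u)) P :=
  .of_bound (by fun_prop) 1 <| .of_forall fun s => by
    simpa using mul_nonneg s.coe_nonneg hu

namespace IsLaplaceTransform

theorem one : IsLaplaceTransform fun _ => 1 :=
  ⟨.dirac 0, inferInstance, by simp⟩

theorem mul {g h : ℝ → ℝ} (hg : IsLaplaceTransform g) (hh : IsLaplaceTransform h) :
    IsLaplaceTransform fun u => g u * h u := by
  obtain ⟨P, _, hP⟩ := hg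
  obtain ⟨Q, _, hQ⟩ := hh
  refine ⟨P ∗ Q, inferInstance, fun u hu => ?_⟩
  beta_reduce
  rw [integral_conv (integrable_exp_neg_mul hu), hP u hu, hQ u hu, ← integral_mul_const]
  congr with s
  rw [← integral_const_mul]
  congr with t
  rw [← exp_add]
  push_cast
  ring_nf

theorem pow {h : ℝ → ℝ} (hh : IsLaplaceTransform h) (n : ℕ) :
    IsLaplaceTransform fun u => h u ^ n := by
  induction n with
  | zero => simpa using one
  | succ n ih => simpa only [pow_succ] using ih.mul hh

theorem norm_le_apply_zero {h : ℝ → ℝ} (hh : IsLaplaceTransform h) {u : ℝ} (hu : 0 ≤ u) :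
    ‖h u‖ ≤ h 0 := by
  obtain ⟨P, _, hP⟩ := hh
  rw [hP u hu, hP 0 le_rfl, norm_of_nonneg (integral_nonneg fun s => (exp_pos _).le)]
  refine integral_mono (integrable_exp_neg_mul hu) (integrable_exp_neg_mul le_rfl) fun s => ?_
  simpa using mul_nonneg s.coe_nonneg hu

theorem continuousOn {h : ℝ → ℝ} (hh : IsLaplaceTransform h) : ContinuousOn h (Set.Ici 0) := by
  obtain ⟨P, _, hP⟩ := hh
  refine (continuousOn_of_dominated (F := fun u (s : ℝ≥0) => exp (-s * u)) (bound := fun _ => 1)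
    (fun u _ => by fun_prop) (fun u hu => .of_forall fun s => ?_) (integrable_const _)
    (.of_forall fun s => by fun_prop)).congr hP
  simpa using mul_nonneg s.coe_nonneg hu

theorem cosTransform_mul_gaussian_nonneg {h : ℝ → ℝ} (hh : IsLaplaceTransform h) {ε : ℝ}
    (hε : 0 < ε) (x : V) : 0 ≤ cosTransform (fun z => h (‖z‖ ^ 2) * exp (-ε * ‖z‖ ^ 2)) x := by
  obtain ⟨P, _, hP⟩ := hh
  have hswap := integral_integral_swap (μ := (volume : Measure V)) (ν := P)
    (f := fun z s => cos ⟪x, z⟫ * exp (-((s : ℝ) + ε) * ‖z‖ ^ 2)) <| by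
    refine ((integrable_exp_neg_mul_sq_norm hε).mul_prod (integrable_const (1 : ℝ))).mono'
      (by fun_prop) (.of_forall fun p => ?_)
    refine norm_mul_le_of_le (abs_cos_le_one _) ?_ |>.trans_eq (mul_comm _ _)
    rw [norm_of_nonneg (exp_pos _).le]
    gcongr
    simp
  have hmixture : cosTransform (fun z => h (‖z‖ ^ 2) * exp (-ε * ‖z‖ ^ 2)) x
      = ∫ s : ℝ≥0, cosTransform (fun z => exp (-((s : ℝ) + ε) * ‖z‖ ^ 2)) x ∂P := by
    refine Eq.trans (integral_congr_ae <| .of_forall fun z => ?_) hswap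
    simp only
    rw [integral_const_mul, hP _ (sq_nonneg _), ← integral_mul_const]
    simp only [← exp_add, neg_add, add_mul]
  rw [hmixture]
  exact integral_nonneg fun s => cosTransform_gaussian_nonneg (by positivity) x

end IsLaplaceTransform

/-- The Lévy measures of driftless subordinators, i.e. those with `∫ min(1, s) m(ds) < ∞`; the
condition is stated as convergence of all integrals defining `laplaceExponent`. -/
def IsSubordinatorMeasure (m : Measure ℝ≥0) : Prop :=
  ∀ u, 0 ≤ u → Integrable (fun s : ℝ≥0 => 1 - exp (-s * u)) m

/-- The Laplace exponent (a Bernstein function) of the driftless subordinator with Lévy measure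
`m`. -/
noncomputable def laplaceExponent (m : Measure ℝ≥0) (u : ℝ) : ℝ :=
  ∫ s : ℝ≥0, (1 - exp (-s * u)) ∂m

theorem one_sub_exp_neg_mul_nonneg (s : ℝ≥0) {u : ℝ} (hu : 0 ≤ u) : 0 ≤ 1 - exp (-s * u) := by
  simpa using mul_nonneg s.coe_nonneg hu

theorem laplaceExponent_nonneg (m : Measure ℝ≥0) {u : ℝ} (hu : 0 ≤ u) : 0 ≤ laplaceExponent m u :=
  integral_nonneg fun s => one_sub_exp_neg_mul_nonneg s hu

theorem isLaplaceTransform_one_sub_div {m : Measure ℝ≥0} {c : ℝ} [IsFiniteMeasure m]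
    (hc : 0 < c) (hmc : m.real Set.univ ≤ c) :
    IsLaplaceTransform fun u => 1 - laplaceExponent m u / c := by
  have hmass : 0 ≤ 1 - m.real Set.univ / c := sub_nonneg.2 ((div_le_one hc).2 hmc)
  refine ⟨(1 - m.real Set.univ / c).toNNReal • Measure.dirac 0 + c⁻¹.toNNReal • m,
    inferInstance, fun u hu => ?_⟩
  have hint := integrable_exp_neg_mul (P := m) hu
  beta_reduce
  rw [integral_add_measure (integrable_exp_neg_mul hu) (integrable_exp_neg_mul hu),
    integral_smul_nnreal_measure, integral_smul_nnreal_measure, integral_dirac, laplaceExponent,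
    integral_sub (integrable_const _) hint]
  simp [NNReal.smul_def, hmass, hc.le]
  ring

namespace IsSubordinatorMeasure

variable {m : Measure ℝ≥0}

/-- The big jumps `1 - e^{-s} ≥ (ψ(1) + 1) / n`, where `ψ` is the Laplace exponent; the threshold
is chosen so that their total mass is at most `n`. -/
def bigJumps (m : Measure ℝ≥0) (n : ℕ) : Set ℝ≥0 :=
  {s | (laplaceExponent m 1 + 1) / n ≤ 1 - exp (-s * 1)}

theorem measurableSet_bigJumps (m : Measure ℝ≥0) (n : ℕ) : MeasurableSet (bigJumps m n) :=
  measurableSet_le (by fun_prop) (by fun_prop)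

theorem measure_bigJumps_lt_top (hm : IsSubordinatorMeasure m) {n : ℕ} (hn : n ≠ 0) :
    m (bigJumps m n) < ⊤ :=
  have := laplaceExponent_nonneg m zero_le_one
  (hm 1 zero_le_one).measure_ge_lt_top (by positivity)

theorem measureReal_bigJumps_le (hm : IsSubordinatorMeasure m) {n : ℕ} (hn : n ≠ 0) :
    m.real (bigJumps m n) ≤ n := by
  have hψ := laplaceExponent_nonneg m zero_le_one
  have hmarkov := mul_meas_ge_le_integral_of_nonneg
    (.of_forall fun s => one_sub_exp_neg_mul_nonneg s zero_le_one) (hm 1 zero_le_one)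
    ((laplaceExponent m 1 + 1) / n)
  have hmul : (laplaceExponent m 1 + 1) * m.real (bigJumps m n) ≤ (laplaceExponent m 1 + 1) * n :=
    calc _ = (laplaceExponent m 1 + 1) / n * m.real (bigJumps m n) * n := by field_simp
      _ ≤ laplaceExponent m 1 * n := by gcongr; exact hmarkov
      _ ≤ (laplaceExponent m 1 + 1) * n := by gcongr; linarith
  exact le_of_mul_le_mul_left hmul (by positivity)

theorem tendsto_laplaceExponent_restrict_bigJumps (hm : IsSubordinatorMeasure m) {u : ℝ}
    (hu : 0 ≤ u) :
    Tendsto (fun n => laplaceExponent (m.restrict (bigJumps m n)) u) atTop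
      (𝓝 (laplaceExponent m u)) := by
  simp only [laplaceExponent, ← integral_indicator (measurableSet_bigJumps m _)]
  refine tendsto_integral_of_dominated_convergence (fun s => 1 - exp (-s * u))
    (fun n => ((hm u hu).indicator (measurableSet_bigJumps m n)).1) (hm u hu)
    (fun n => .of_forall fun s => (norm_indicator_le_norm_self _ _).trans_eq
      (norm_of_nonneg (one_sub_exp_neg_mul_nonneg s hu)))
    (.of_forall fun s => tendsto_const_nhds.congr' ?_)
  rcases eq_or_ne s 0 with rfl | hs
  · exact .of_forall fun n => by symm; simp
  · have hpos : 0 < 1 - exp (-s * 1) := by simpa using pos_iff_ne_zero.2 hs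
    have hthreshold := (tendsto_const_div_atTop_nhds_zero_nat (laplaceExponent m 1 + 1)).eventually
      (ge_mem_nhds hpos)
    filter_upwards [hthreshold] with n hn
    rw [Set.indicator_of_mem (show s ∈ bigJumps m n from hn)]

theorem exists_isLaplaceTransform_tendsto (hm : IsSubordinatorMeasure m) :
    ∃ H : ℕ → ℝ → ℝ, (∀ n, IsLaplaceTransform (H n) ∧ H n 0 = 1) ∧
      ∀ u, 0 ≤ u → Tendsto (fun n => H n u) atTop (𝓝 (exp (-laplaceExponent m u))) := by
  refine ⟨fun n u => (1 - laplaceExponent (m.restrict (bigJumps m n)) u / n) ^ n,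
    fun n => ⟨?_, by simp [laplaceExponent]⟩, fun u hu => ?_⟩
  · rcases eq_or_ne n 0 with rfl | hn
    · simpa using IsLaplaceTransform.one
    have := isFiniteMeasure_restrict.2 (hm.measure_bigJumps_lt_top hn).ne
    refine (isLaplaceTransform_one_sub_div (by positivity) ?_).pow n
    simpa using hm.measureReal_bigJumps_le hn
  · simp only [sub_eq_add_neg]
    refine tendsto_one_add_pow_exp_of_tendsto <|
      (hm.tendsto_laplaceExponent_restrict_bigJumps hu).neg.congr' ?_
    filter_upwards [eventually_ne_atTop 0] with n hn
    field_simp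

theorem cosTransform_exp_neg_laplaceExponent_nonneg (hm : IsSubordinatorMeasure m)
    (hint : Integrable fun z : V => exp (-laplaceExponent m (‖z‖ ^ 2))) (x : V) :
    0 ≤ cosTransform (fun z => exp (-laplaceExponent m (‖z‖ ^ 2))) x := by
  obtain ⟨H, hH, hlim⟩ := hm.exists_isLaplaceTransform_tendsto
  have hdamped {ε : ℝ} (hε : 0 < ε) :
      0 ≤ cosTransform (fun z => exp (-laplaceExponent m (‖z‖ ^ 2)) * exp (-ε * ‖z‖ ^ 2)) x := by
    refine ge_of_tendsto' (tendsto_cosTransform_of_dominated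
      (F := fun n z => H n (‖z‖ ^ 2) * exp (-ε * ‖z‖ ^ 2)) (fun n => ?_)
      (integrable_exp_neg_mul_sq_norm hε) (.of_forall fun n z => ?_)
      (fun z => (hlim _ (sq_nonneg _)).mul_const _) x)
      fun n => (hH n).1.cosTransform_mul_gaussian_nonneg hε x
    · have : Continuous fun z : V => H n (‖z‖ ^ 2) :=
        (hH n).1.continuousOn.comp_continuous (by fun_prop) fun z => sq_nonneg ‖z‖
      exact (this.mul (by fun_prop)).aestronglyMeasurable
    · have := (hH n).1.norm_le_apply_zero (sq_nonneg ‖z‖)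
      simpa using norm_mul_le_of_le (this.trans_eq (hH n).2) (norm_of_nonneg (exp_pos _).le).le
  refine ge_of_tendsto' (tendsto_cosTransform_of_dominated
    (fun n => hint.1.mul (by fun_prop)) hint (.of_forall fun n z => ?_)
    (fun z => by simpa using (tendsto_exp_neg_one_div_mul_sq ‖z‖).const_mul _) x)
    fun n => hdamped (by positivity)
  rw [Pi.mul_apply, norm_mul, norm_of_nonneg (exp_pos _).le, norm_of_nonneg (exp_pos _).le]
  exact mul_le_of_le_one_right (exp_pos _).le (exp_neg_mul_sq_le_one (by positivity) _)

end IsSubordinatorMeasure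

/-- The Lévy measure of the `p`-stable subordinator, up to a constant factor: the image of
Lebesgue measure on `(0, ∞)` under `r ↦ r ^ (-1 / p)`, which has density `p s ^ (-1 - p)`. -/
noncomputable def stableJumpMeasure (p : ℝ) : Measure ℝ≥0 :=
  (volume.restrict (Set.Ioi 0)).map fun r : ℝ => (r ^ (-p⁻¹)).toNNReal

theorem integrable_stableJumpMeasure_iff {p : ℝ} {f : ℝ → ℝ} (hf : Measurable f) :
    Integrable (fun s : ℝ≥0 => f s) (stableJumpMeasure p) ↔
      IntegrableOn (fun r : ℝ => f (r ^ (-p⁻¹))) (Set.Ioi 0) := by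
  rw [stableJumpMeasure, integrable_map_measure
    (by fun_prop : Measurable fun s : ℝ≥0 => f s).aestronglyMeasurable (by fun_prop)]
  refine integrableOn_congr_fun (fun r hr => ?_) measurableSet_Ioi
  simp [rpow_nonneg (Set.mem_Ioi.1 hr).le]

theorem laplaceExponent_stableJumpMeasure (p u : ℝ) :
    laplaceExponent (stableJumpMeasure p) u
      = ∫ r in Set.Ioi (0 : ℝ), (1 - exp (-r ^ (-p⁻¹) * u)) := by
  rw [laplaceExponent, stableJumpMeasure, integral_map (by fun_prop) (by fun_prop)]
  refine setIntegral_congr_fun measurableSet_Ioi fun r hr => ?_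
  simp [rpow_nonneg (Set.mem_Ioi.1 hr).le]

theorem isSubordinatorMeasure_stableJumpMeasure {p : ℝ} (hp0 : 0 < p) (hp1 : p < 1) :
    IsSubordinatorMeasure (stableJumpMeasure p) := by
  intro u hu
  rw [integrable_stableJumpMeasure_iff (f := fun s => 1 - exp (-s * u)) (by fun_prop),
    ← Set.Ioc_union_Ioi_eq_Ioi zero_le_one]
  have hnonneg {r : ℝ} (hr : 0 < r) : 0 ≤ 1 - exp (-r ^ (-p⁻¹) * u) := by
    simpa using mul_nonneg (rpow_nonneg hr.le _) hu
  refine IntegrableOn.union (.of_bound (by simp) (by fun_prop) 1 ?_) ?_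
  · filter_upwards [ae_restrict_mem measurableSet_Ioc] with r hr
    rw [norm_of_nonneg (hnonneg hr.1)]
    linarith [exp_pos (-r ^ (-p⁻¹) * u)]
  · refine ((integrableOn_Ioi_rpow_of_lt (neg_lt_neg (one_lt_inv₀ hp0 |>.2 hp1))
      one_pos).mul_const u).mono' (by fun_prop) ?_
    filter_upwards [ae_restrict_mem measurableSet_Ioi] with r hr
    rw [norm_of_nonneg (hnonneg (one_pos.trans hr))]
    linarith [add_one_le_exp (-r ^ (-p⁻¹) * u)]

theorem laplaceExponent_stableJumpMeasure_eq_rpow_mul {p : ℝ} (hp : 0 < p) {u : ℝ} (hu : 0 ≤ u) :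
    laplaceExponent (stableJumpMeasure p) u
      = u ^ p * laplaceExponent (stableJumpMeasure p) 1 := by
  rcases hu.eq_or_lt with rfl | hu
  · simp [laplaceExponent, hp.ne']
  have hscale := integral_comp_mul_left_Ioi (fun r => 1 - exp (-r ^ (-p⁻¹) * 1)) 0
    (rpow_pos_of_pos hu (-p))
  rw [laplaceExponent_stableJumpMeasure, laplaceExponent_stableJumpMeasure]
  rw [mul_zero, rpow_neg hu.le, inv_inv, smul_eq_mul] at hscale
  rw [← hscale]
  refine setIntegral_congr_fun measurableSet_Ioi fun r hr => ?_
  have hr : 0 < r := hr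
  rw [mul_rpow (by positivity) hr.le, ← rpow_neg hu.le, ← rpow_mul hu.le, neg_mul_neg,
    mul_inv_cancel₀ hp.ne', rpow_one]
  ring_nf

theorem laplaceExponent_stableJumpMeasure_one_pos {p : ℝ} (hp0 : 0 < p) (hp1 : p < 1) :
    0 < laplaceExponent (stableJumpMeasure p) 1 := by
  have hpos {r : ℝ} (hr : r ∈ Set.Ioi 0) : 0 < 1 - exp (-r ^ (-p⁻¹) * 1) := by
    simpa using rpow_pos_of_pos (Set.mem_Ioi.1 hr) _
  have hint := (integrable_stableJumpMeasure_iff (f := fun s => 1 - exp (-s * 1)) (by fun_prop)).1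
    (isSubordinatorMeasure_stableJumpMeasure hp0 hp1 1 zero_le_one)
  rw [laplaceExponent_stableJumpMeasure, setIntegral_pos_iff_support_of_nonneg_ae
    (ae_restrict_of_forall_mem measurableSet_Ioi fun r hr => (hpos hr).le) hint,
    Set.inter_eq_right.2 fun r hr => Function.mem_support.2 (hpos hr).ne']
  simp

theorem exists_laplaceExponent_eq_mul_rpow {p a : ℝ} (hp0 : 0 < p) (hp1 : p < 1) (ha : 0 ≤ a) :
    ∃ m, IsSubordinatorMeasure m ∧ ∀ u, 0 ≤ u → laplaceExponent m u = a * u ^ p := by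
  have hpos := laplaceExponent_stableJumpMeasure_one_pos hp0 hp1
  set k : ℝ≥0 := (a / laplaceExponent (stableJumpMeasure p) 1).toNNReal with hk
  refine ⟨k • stableJumpMeasure p, fun u hu =>
    (isSubordinatorMeasure_stableJumpMeasure hp0 hp1 u hu).smul_measure_nnreal, fun u hu => ?_⟩
  rw [laplaceExponent, integral_smul_nnreal_measure, ← laplaceExponent,
    laplaceExponent_stableJumpMeasure_eq_rpow_mul hp0 hu, NNReal.smul_def, hk,
    coe_toNNReal _ (by positivity)]
  simp only [smul_eq_mul]
  field_simp

section Nontrivial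

variable [Nontrivial V]

theorem integrable_norm_rpow_mul_exp_neg_mul_norm_rpow {β γ b : ℝ} (hβ : 0 ≤ β) (hγ : 0 < γ)
    (hb : 0 < b) : Integrable fun z : V => ‖z‖ ^ β * exp (-b * ‖z‖ ^ γ) := by
  rw [integrable_fun_norm_addHaar volume (f := fun r => r ^ β * exp (-b * r ^ γ))]
  refine (integrableOn_rpow_mul_exp_neg_mul_rpow (s := (Module.finrank ℝ V - 1 : ℕ) + β)
    (by linarith [Nat.cast_nonneg (α := ℝ) (Module.finrank ℝ V - 1)]) hγ hb).congr_fun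
    (fun r hr => ?_) measurableSet_Ioi
  simp only [rpow_add (Set.mem_Ioi.1 hr), rpow_natCast, smul_eq_mul, mul_assoc]

theorem integrable_exp_neg_mul_norm_rpow {α a : ℝ} (hα : 0 < α) (ha : 0 < a) :
    Integrable fun z : V => exp (-a * ‖z‖ ^ α) := by
  simpa using integrable_norm_rpow_mul_exp_neg_mul_norm_rpow (V := V) le_rfl hα ha

theorem cosTransform_exp_neg_mul_norm_rpow_nonneg {α a : ℝ} (hα : 0 < α) (hα2 : α ≤ 2)
    (ha : 0 < a) (x : V) : 0 ≤ cosTransform (fun z => exp (-a * ‖z‖ ^ α)) x := by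
  rcases hα2.eq_or_lt with rfl | hα2
  · simpa using cosTransform_gaussian_nonneg ha x
  obtain ⟨m, hm, hexponent⟩ :=
    exists_laplaceExponent_eq_mul_rpow (half_pos hα) (by linarith : α / 2 < 1) ha.le
  have hsubordinate (z : V) : exp (-a * ‖z‖ ^ α) = exp (-laplaceExponent m (‖z‖ ^ 2)) := by
    rw [hexponent _ (sq_nonneg _), ← rpow_natCast, ← rpow_mul (norm_nonneg z), Nat.cast_ofNat,
      mul_div_cancel₀ α two_ne_zero, neg_mul]
  have hint := integrable_exp_neg_mul_norm_rpow (V := V) hα ha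
  simp only [hsubordinate] at hint ⊢
  exact hm.cosTransform_exp_neg_laplaceExponent_nonneg hint x

end Nontrivial

theorem integrable_and_integral_le_of_tendsto {Ω : Type*} [MeasurableSpace Ω] {μ : Measure Ω}
    {f : Ω → ℝ} {F : ℕ → Ω → ℝ} {M : ℝ}
    (hF : ∀ n, Integrable (F n) μ) (hF0 : ∀ n, 0 ≤ᵐ[μ] F n) (hM : ∀ n, ∫ x, F n x ∂μ ≤ M)
    (hlim : ∀ᵐ x ∂μ, Tendsto (fun n => F n x) atTop (𝓝 (f x))) :
    Integrable f μ ∧ ∫ x, f x ∂μ ≤ M := by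
  have hf := aestronglyMeasurable_of_tendsto_ae atTop (fun n => (hF n).1) hlim
  have hf0 : 0 ≤ᵐ[μ] f := by
    filter_upwards [ae_all_iff.2 hF0, hlim] with x hx hxlim using ge_of_tendsto' hxlim hx
  have hM0 : 0 ≤ M := (integral_nonneg_of_ae (hF0 0)).trans (hM 0)
  have hfatou : ∫⁻ x, ENNReal.ofReal (f x) ∂μ ≤ ENNReal.ofReal M := by
    calc _ = ∫⁻ x, liminf (fun n => ENNReal.ofReal (F n x)) atTop ∂μ :=
          lintegral_congr_ae <| hlim.mono fun x hx => (ENNReal.tendsto_ofReal hx).liminf_eq.symm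
      _ ≤ liminf (fun n => ∫⁻ x, ENNReal.ofReal (F n x) ∂μ) atTop :=
          lintegral_liminf_le' fun n => (hF n).1.aemeasurable.ennreal_ofReal
      _ ≤ ENNReal.ofReal M := liminf_le_of_frequently_le' <| .of_forall fun n => by
          rw [← ofReal_integral_eq_lintegral_ofReal (hF n) (hF0 n)]
          exact ENNReal.ofReal_le_ofReal (hM n)
  refine ⟨⟨hf, (hasFiniteIntegral_iff_ofReal hf0).2 (hfatou.trans_lt ENNReal.ofReal_lt_top)⟩, ?_⟩
  rw [integral_eq_lintegral_of_nonneg_ae hf0 hf]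
  exact ENNReal.toReal_le_of_le_ofReal hM0 hfatou

section Truncation

variable {φ : V → ℝ}

theorem integrable_one_sub_mul_cosTransform_gaussian (hφ : Integrable φ) {b : ℝ} (hb : 0 < b) :
    Integrable fun z => (1 - φ z) * cosTransform (fun w => exp (-b * ‖w‖ ^ 2)) z := by
  simp only [sub_mul, one_mul]
  exact (integrable_cosTransform_gaussian hb).sub
    (integrable_mul_cosTransform hφ (integrable_exp_neg_mul_sq_norm hb))

theorem integral_one_sub_mul_cosTransform_gaussian (hφ : Integrable φ) {b : ℝ} (hb : 0 < b) :
    ∫ z, (1 - φ z) * cosTransform (fun w => exp (-b * ‖w‖ ^ 2)) z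
      = (2 * π) ^ Module.finrank ℝ V - ∫ x, cosTransform φ x * exp (-b * ‖x‖ ^ 2) := by
  have hg := integrable_exp_neg_mul_sq_norm (V := V) hb
  simp only [sub_mul, one_mul]
  rw [integral_sub (integrable_cosTransform_gaussian hb) (integrable_mul_cosTransform hφ hg),
    integral_cosTransform_gaussian hb, integral_cosTransform_mul hφ hg]

theorem integrable_and_integral_cosTransform_le (hφ : Integrable φ) (hφ1 : ∀ z, φ z ≤ 1)
    (hpos : ∀ x, 0 ≤ cosTransform φ x) :
    Integrable (cosTransform φ) ∧ ∫ x, cosTransform φ x ≤ (2 * π) ^ Module.finrank ℝ V := by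
  refine integrable_and_integral_le_of_tendsto
    (F := fun n x => cosTransform φ x * exp (-(1 / ((n : ℝ) + 1)) * ‖x‖ ^ 2))
    (fun n => ?_)
    (fun n => .of_forall fun x => mul_nonneg (hpos x) (exp_pos _).le) (fun n => ?_)
    (.of_forall fun x => by simpa using (tendsto_exp_neg_one_div_mul_sq ‖x‖).const_mul _)
  · simpa only [mul_comm] using integrable_mul_cosTransform
      (integrable_exp_neg_mul_sq_norm (by positivity : (0 : ℝ) < 1 / ((n : ℝ) + 1))) hφ
  · rw [← sub_nonneg, ← integral_one_sub_mul_cosTransform_gaussian hφ (by positivity)]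
    exact integral_nonneg fun z => mul_nonneg (sub_nonneg.2 (hφ1 z))
      (cosTransform_gaussian_nonneg (by positivity) z)

theorem setIntegral_compl_ball_cosTransform_le (hφ : Integrable φ) (hφ1 : ∀ z, φ z ≤ 1)
    (hpos : ∀ x, 0 ≤ cosTransform φ x) {R : ℝ} (hR : 0 < R) :
    ∫ x in (Metric.ball 0 R)ᶜ, cosTransform φ x ≤ (1 - exp (-1))⁻¹ *
      ∫ z, (1 - φ z) * cosTransform (fun w => exp (-(R ^ 2)⁻¹ * ‖w‖ ^ 2)) z := by
  have hη : 0 < (R ^ 2)⁻¹ := by positivity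
  obtain ⟨hint, hmass⟩ := integrable_and_integral_cosTransform_le hφ hφ1 hpos
  have hdamped : Integrable fun x => cosTransform φ x * exp (-(R ^ 2)⁻¹ * ‖x‖ ^ 2) := by
    simpa only [mul_comm] using integrable_mul_cosTransform (integrable_exp_neg_mul_sq_norm hη) hφ
  have hweighted : Integrable fun x => cosTransform φ x * (1 - exp (-(R ^ 2)⁻¹ * ‖x‖ ^ 2)) := by
    simp only [mul_sub, mul_one]
    exact hint.sub hdamped
  rw [le_inv_mul_iff₀' (by simp : 0 < 1 - exp (-1)), ← integral_mul_const]
  calc ∫ x in (Metric.ball 0 R)ᶜ, cosTransform φ x * (1 - exp (-1))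
      ≤ ∫ x in (Metric.ball 0 R)ᶜ, cosTransform φ x * (1 - exp (-(R ^ 2)⁻¹ * ‖x‖ ^ 2)) :=
        setIntegral_mono_on (hint.mul_const _).integrableOn hweighted.integrableOn
          measurableSet_ball.compl fun x hx => mul_le_mul_of_nonneg_left
            (one_sub_exp_neg_one_le hR (by simpa using hx)) (hpos x)
    _ ≤ ∫ x, cosTransform φ x * (1 - exp (-(R ^ 2)⁻¹ * ‖x‖ ^ 2)) :=
        setIntegral_le_integral hweighted <| .of_forall fun x => mul_nonneg (hpos x)
          (sub_nonneg.2 (exp_neg_mul_sq_le_one hη.le _))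
    _ = (∫ x, cosTransform φ x) - ∫ x, cosTransform φ x * exp (-(R ^ 2)⁻¹ * ‖x‖ ^ 2) := by
        rw [← integral_sub hint hdamped]
        simp only [mul_sub, mul_one]
    _ ≤ (2 * π) ^ Module.finrank ℝ V
          - ∫ x, cosTransform φ x * exp (-(R ^ 2)⁻¹ * ‖x‖ ^ 2) := by gcongr
    _ = _ := (integral_one_sub_mul_cosTransform_gaussian hφ hη).symm

end Truncation

theorem integral_norm_rpow_mul_cosTransform_comp_smul (f : V → ℝ) (α : ℝ) {R : ℝ} (hR : 0 < R) :
    ∫ z, ‖z‖ ^ α * cosTransform (fun w => f (R⁻¹ • w)) z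
      = (∫ z, ‖z‖ ^ α * cosTransform f z) / R ^ α := by
  have hscale := Measure.integral_comp_smul_of_nonneg (volume : Measure V)
    (fun z => ‖z‖ ^ α * cosTransform f z) R (hR := hR.le)
  have hRα := rpow_pos_of_pos hR α
  simp only [norm_smul, norm_of_nonneg hR.le, mul_rpow hR.le (norm_nonneg _), mul_assoc,
    integral_const_mul, smul_eq_mul] at hscale
  simp only [cosTransform_comp_smul f (inv_pos.2 hR), inv_pow, inv_inv, mul_left_comm (‖_‖ ^ α),
    integral_const_mul]
  rw [eq_div_iff hRα.ne', mul_assoc, mul_comm _ (R ^ α), hscale]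
  field_simp

section Nontrivial

variable [Nontrivial V] {α a R : ℝ}

theorem integral_one_sub_exp_neg_mul_norm_rpow_mul_cosTransform_gaussian_le (hα : 0 < α)
    (ha : 0 < a) (hR : 0 < R) :
    ∫ z : V, (1 - exp (-a * ‖z‖ ^ α)) * cosTransform (fun w => exp (-(R ^ 2)⁻¹ * ‖w‖ ^ 2)) z ≤
      a * ((∫ z : V, ‖z‖ ^ α * cosTransform (fun w => exp (-1 * ‖w‖ ^ 2)) z) / R ^ α) := by
  have hη : 0 < (R ^ 2)⁻¹ := by positivity
  have hmoment : Integrable fun z : V =>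
      a * (‖z‖ ^ α * cosTransform (fun w => exp (-(R ^ 2)⁻¹ * ‖w‖ ^ 2)) z) := by
    simp only [cosTransform_gaussian hη, mul_left_comm (‖_‖ ^ α)]
    exact_mod_cast ((integrable_norm_rpow_mul_exp_neg_mul_norm_rpow hα.le two_pos
      (by positivity)).const_mul _).const_mul a
  have hdilate (w : V) : exp (-(R ^ 2)⁻¹ * ‖w‖ ^ 2) = exp (-1 * ‖R⁻¹ • w‖ ^ 2) := by
    rw [norm_smul, norm_of_nonneg (inv_pos.2 hR).le]
    ring_nf
  rw [← integral_norm_rpow_mul_cosTransform_comp_smul _ α hR, ← integral_const_mul]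
  simp only [← hdilate]
  refine integral_mono (integrable_one_sub_mul_cosTransform_gaussian
    (integrable_exp_neg_mul_norm_rpow hα ha) hη) hmoment fun z => ?_
  beta_reduce
  rw [← mul_assoc]
  gcongr
  · exact cosTransform_gaussian_nonneg hη z
  · linarith [add_one_le_exp (-a * ‖z‖ ^ α)]

theorem setIntegral_compl_ball_cosTransform_exp_neg_mul_norm_rpow_le (hα : 0 < α) (hα2 : α ≤ 2)
    (ha : 0 < a) (hR : 0 < R) :
    ∫ x in (Metric.ball (0 : V) R)ᶜ, cosTransform (fun z => exp (-a * ‖z‖ ^ α)) x ≤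
      (1 - exp (-1))⁻¹ * (a *
        ((∫ z : V, ‖z‖ ^ α * cosTransform (fun w => exp (-1 * ‖w‖ ^ 2)) z) / R ^ α)) := by
  have hle_one (z : V) : exp (-a * ‖z‖ ^ α) ≤ 1 := by
    rw [exp_le_one_iff, neg_mul, neg_nonpos]
    positivity
  refine (setIntegral_compl_ball_cosTransform_le (integrable_exp_neg_mul_norm_rpow hα ha) hle_one
    (cosTransform_exp_neg_mul_norm_rpow_nonneg hα hα2 ha) hR).trans ?_
  gcongr
  · simp
  · exact integral_one_sub_exp_neg_mul_norm_rpow_mul_cosTransform_gaussian_le hα ha hR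

end Nontrivial

theorem stableKernel_eq_cosTransform {d : ℕ} [NeZero d] {ν α t : ℝ} (hν : 0 < ν) (hα : 0 < α)
    (ht : 0 < t) (x : EuclideanSpace ℝ (Fin d)) :
    stableKernel d ν α t x
      = ((2 * π) ^ d)⁻¹ * cosTransform (fun z => exp (-(t * ν) * ‖z‖ ^ α)) x := by
  rw [stableKernel, cosTransform_eq_re (integrable_exp_neg_mul_norm_rpow hα (mul_pos ht hν))]
  simp

/-- Tail mass estimate: there is `c > 0` with `∫_{B(0,R)ᶜ} p_t(y) dy ≤ c t / R^α`. -/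
theorem stableKernel_tail_mass (d : ℕ) (hd : 1 ≤ d) (ν α : ℝ) (hν : 0 < ν)
    (hα : 0 < α) (hα2 : α ≤ 2) :
    ∃ c > (0 : ℝ), ∀ (t : ℝ), 0 < t → ∀ (R : ℝ), 0 < R →
      (∫ y in (Metric.ball (0 : EuclideanSpace ℝ (Fin d)) R)ᶜ, stableKernel d ν α t y)
        ≤ c * t / R ^ α := by
  have : NeZero d := ⟨by lia⟩
  set C := ∫ z : EuclideanSpace ℝ (Fin d), ‖z‖ ^ α * cosTransform (fun w => exp (-1 * ‖w‖ ^ 2)) z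
  have hC : 0 ≤ C := integral_nonneg fun z =>
    mul_nonneg (rpow_nonneg (norm_nonneg z) α) (cosTransform_gaussian_nonneg one_pos z)
  have he : 0 < 1 - exp (-1) := by simp
  refine ⟨((2 * π) ^ d)⁻¹ * ((1 - exp (-1))⁻¹ * (ν * C)) + 1, by positivity, fun t ht R hR => ?_⟩
  calc _ = ((2 * π) ^ d)⁻¹ * ∫ y in (Metric.ball (0 : EuclideanSpace ℝ (Fin d)) R)ᶜ,
            cosTransform (fun z => exp (-(t * ν) * ‖z‖ ^ α)) y := by
        simp only [stableKernel_eq_cosTransform hν hα ht, integral_const_mul]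
    _ ≤ ((2 * π) ^ d)⁻¹ * ((1 - exp (-1))⁻¹ * (t * ν * (C / R ^ α))) := by
        gcongr
        exact setIntegral_compl_ball_cosTransform_exp_neg_mul_norm_rpow_le hα hα2
          (mul_pos ht hν) hR
    _ = ((2 * π) ^ d)⁻¹ * ((1 - exp (-1))⁻¹ * (ν * C)) * t / R ^ α := by ring
    _ ≤ (((2 * π) ^ d)⁻¹ * ((1 - exp (-1))⁻¹ * (ν * C)) + 1) * t / R ^ α := by
        gcongr
        exact le_add_of_nonneg_right zero_le_one
end

section
/- Let d ≥ 1, α > 0 and 0 < β < d. Then the double integral ∫_{{y ∈ ℝ^d : |y| ≥ 1}} ∫_{{w ∈ ℝ^d : |w| ≥ 1}} |y|^{−(d+α)} |w|^{−(d+α)} |y−w|^{−β} dw dy is finite. -/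
open MeasureTheory Real

/-!
Split the kernel `‖z‖ ^ (-β)` at the unit sphere into an integrable singular part and a bounded
tail. Against the singular part, one weight only has to be bounded, because
`(y, w) ↦ g w * k (y - w)` is integrable for integrable `g` and `k`; against the bounded tail, the
product of the two integrable weights is enough. Outside a ball around the origin, the weight
`‖y‖ ^ (-a)` with `a` above the dimension is both bounded and integrable.
-/

section DifferenceKernel

variable {G 𝕜 : Type*} [AddGroup G] [MeasurableSpace G] [MeasurableAdd₂ G] [MeasurableNeg G]
  [NontriviallyNormedField 𝕜] {μ ν₁ ν₂ : Measure G} [SFinite μ] [μ.IsAddRightInvariant]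
  [SFinite ν₂] {f g k k₁ k₂ : G → 𝕜} {C D : ℝ}

theorem quasiMeasurePreserving_sub_of_absolutelyContinuous (hν : ν₁ ≪ μ) :
    Measure.QuasiMeasurePreserving (fun p : G × G => p.1 - p.2) (ν₁.prod ν₂) μ :=
  (quasiMeasurePreserving_sub_of_right_invariant μ ν₂).mono_left
    (hν.prod Measure.AbsolutelyContinuous.rfl)

theorem integrable_mul_mul_sub_of_integrable_kernel (hν : ν₁ ≤ μ)
    (hf : AEStronglyMeasurable f ν₁) (hfC : ∀ᵐ x ∂ν₁, ‖f x‖ ≤ C)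
    (hg : Integrable g ν₂) (hk : Integrable k μ) :
    Integrable (fun p : G × G => f p.1 * g p.2 * k (p.1 - p.2)) (ν₁.prod ν₂) := by
  have hgk : Integrable (fun p : G × G => g p.2 * k (p.1 - p.2)) (ν₁.prod ν₂) :=
    (hg.convolution_integrand (ContinuousLinearMap.mul 𝕜 𝕜) hk).mono_measure
      (Measure.prod_mono hν le_rfl)
  simpa only [mul_assoc] using
    hgk.bdd_mul hf.comp_fst (Measure.quasiMeasurePreserving_fst.ae hfC)

theorem integrable_mul_mul_sub_of_bounded_kernel (hν : ν₁ ≪ μ)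
    (hf : Integrable f ν₁) (hg : Integrable g ν₂)
    (hk : AEStronglyMeasurable k μ) (hkD : ∀ᵐ x ∂μ, ‖k x‖ ≤ D) :
    Integrable (fun p : G × G => f p.1 * g p.2 * k (p.1 - p.2)) (ν₁.prod ν₂) :=
  have hsub := quasiMeasurePreserving_sub_of_absolutelyContinuous (ν₂ := ν₂) hν
  (hf.mul_prod hg).mul_bdd (hk.comp_quasiMeasurePreserving hsub) (hsub.ae hkD)

theorem integrable_mul_mul_sub_of_integrable_add_bounded (hν : ν₁ ≤ μ)
    (hf : Integrable f ν₁) (hfC : ∀ᵐ x ∂ν₁, ‖f x‖ ≤ C) (hg : Integrable g ν₂)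
    (hk₁ : Integrable k₁ μ) (hk₂ : AEStronglyMeasurable k₂ μ) (hk₂D : ∀ᵐ x ∂μ, ‖k₂ x‖ ≤ D) :
    Integrable (fun p : G × G => f p.1 * g p.2 * (k₁ + k₂) (p.1 - p.2)) (ν₁.prod ν₂) := by
  simp only [Pi.add_apply, mul_add]
  exact (integrable_mul_mul_sub_of_integrable_kernel hν hf.1 hfC hg hk₁).add
    (integrable_mul_mul_sub_of_bounded_kernel hν.absolutelyContinuous hf hg hk₂ hk₂D)

end DifferenceKernel

theorem norm_norm_rpow_neg_le {E : Type*} [SeminormedAddCommGroup E] {a R : ℝ} (ha : 0 ≤ a)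
    (hR : 0 < R) {x : E} (hx : R ≤ ‖x‖) : ‖‖x‖ ^ (-a)‖ ≤ R ^ (-a) := by
  rw [norm_of_nonneg (by positivity)]
  exact rpow_le_rpow_of_nonpos hR hx (neg_nonpos.2 ha)

theorem norm_rpow_neg_le_mul_one_add_norm_rpow_neg {E : Type*} [SeminormedAddCommGroup E]
    {a R : ℝ} (ha : 0 ≤ a) (hR : 0 < R) {x : E} (hx : R ≤ ‖x‖) :
    ‖x‖ ^ (-a) ≤ (1 + R⁻¹) ^ a * (1 + ‖x‖) ^ (-a) := by
  have hone : 1 ≤ R⁻¹ * ‖x‖ := by rwa [inv_mul_eq_div, one_le_div hR]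
  calc ‖x‖ ^ (-a) = (1 + R⁻¹) ^ a * ((1 + R⁻¹) * ‖x‖) ^ (-a) := by
        rw [mul_rpow (by positivity) (norm_nonneg x), ← mul_assoc, ← rpow_add (by positivity),
          add_neg_cancel, rpow_zero, one_mul]
    _ ≤ (1 + R⁻¹) ^ a * (1 + ‖x‖) ^ (-a) := by
        gcongr ?_ * ?_
        exact rpow_le_rpow_of_nonpos (by positivity) (by linarith) (neg_nonpos.2 ha)

section NormPower

variable {E : Type*} [NormedAddCommGroup E] [NormedSpace ℝ E] [FiniteDimensional ℝ E]
  [MeasurableSpace E] [BorelSpace E] {μ : Measure E} [μ.IsAddHaarMeasure] {a b R S β : ℝ}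

theorem integrableOn_norm_rpow_neg_setOf_le_norm (ha : Module.finrank ℝ E < a) (hR : 0 < R) :
    IntegrableOn (fun x : E => ‖x‖ ^ (-a)) {x | R ≤ ‖x‖} μ := by
  have ha₀ : 0 ≤ a := (Nat.cast_nonneg _).trans ha.le
  refine ((integrable_one_add_norm ha).const_mul ((1 + R⁻¹) ^ a)).integrableOn.mono'
    (Measurable.aestronglyMeasurable (by fun_prop)) ?_
  filter_upwards [ae_restrict_mem (measurableSet_le measurable_const measurable_norm)] with x hx
  rw [norm_of_nonneg (by positivity)]
  exact norm_rpow_neg_le_mul_one_add_norm_rpow_neg ha₀ hR hx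

theorem integrableOn_norm_rpow_neg_ball (hE : 1 ≤ Module.finrank ℝ E)
    (hβ : β < Module.finrank ℝ E) :
    IntegrableOn (fun x : E => ‖x‖ ^ (-β)) (Metric.ball 0 R) μ := by
  refine integrableOn_ball_of_norm_le_rpow (C := 1) hE hβ (.of_forall fun x => ?_)
    (Measurable.aestronglyMeasurable (by fun_prop))
  rw [one_mul, norm_of_nonneg (by positivity)]

theorem integrable_mul_mul_norm_sub_rpow_neg {ν₁ ν₂ : Measure E} [SFinite ν₂]
    {f g : E → ℝ} {C : ℝ} (hν : ν₁ ≤ μ) (hf : Integrable f ν₁) (hfC : ∀ᵐ x ∂ν₁, ‖f x‖ ≤ C)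
    (hg : Integrable g ν₂) (hβ₀ : 0 ≤ β) (hβ : β < Module.finrank ℝ E) :
    Integrable (fun p : E × E => f p.1 * g p.2 * ‖p.1 - p.2‖ ^ (-β)) (ν₁.prod ν₂) := by
  let k : E → ℝ := fun z => ‖z‖ ^ (-β)
  let B : Set E := Metric.ball 0 1
  have hB : MeasurableSet B := measurableSet_ball
  have hE : 1 ≤ Module.finrank ℝ E := Nat.cast_pos.1 (hβ₀.trans_lt hβ)
  have near : Integrable (B.indicator k) μ :=
    (integrableOn_norm_rpow_neg_ball hE hβ).integrable_indicator hB
  have far_meas : AEStronglyMeasurable (Bᶜ.indicator k) μ :=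
    (Measurable.indicator (by fun_prop) hB.compl).aestronglyMeasurable
  have far_le (z : E) : ‖Bᶜ.indicator k z‖ ≤ 1 := by
    by_cases hz : z ∈ B
    · simp [hz]
    · have hz' : 1 ≤ ‖z‖ := by simpa [B] using hz
      simpa [hz] using norm_norm_rpow_neg_le hβ₀ one_pos hz'
  simpa only [Set.indicator_self_add_compl] using
    integrable_mul_mul_sub_of_integrable_add_bounded hν hf hfC hg near far_meas
      (.of_forall far_le)

theorem riesz_double_integral_finite_general (ha : Module.finrank ℝ E < a)
    (hb : Module.finrank ℝ E < b) (hβ₀ : 0 ≤ β) (hβ : β < Module.finrank ℝ E)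
    (hR : 0 < R) (hS : 0 < S) :
    IntegrableOn (fun yw : E × E => ‖yw.1‖ ^ (-a) * ‖yw.2‖ ^ (-b) * ‖yw.1 - yw.2‖ ^ (-β))
      ({y | R ≤ ‖y‖} ×ˢ {w | S ≤ ‖w‖}) (μ.prod μ) := by
  have ha₀ : 0 ≤ a := (Nat.cast_nonneg _).trans ha.le
  have weight_le : ∀ᵐ y ∂μ.restrict {y : E | R ≤ ‖y‖}, ‖‖y‖ ^ (-a)‖ ≤ R ^ (-a) :=
    (ae_restrict_mem (measurableSet_le measurable_const measurable_norm)).mono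
      fun _ hy => norm_norm_rpow_neg_le ha₀ hR hy
  rw [IntegrableOn, ← Measure.prod_restrict]
  exact integrable_mul_mul_norm_sub_rpow_neg Measure.restrict_le_self
    (integrableOn_norm_rpow_neg_setOf_le_norm ha hR) weight_le
    (integrableOn_norm_rpow_neg_setOf_le_norm hb hS) hβ₀ hβ

end NormPower

/-- Finiteness of the double integral
`∫_{|y|≥1} ∫_{|w|≥1} |y|^{-(d+α)} |w|^{-(d+α)} |y-w|^{-β} dw dy < ∞`
for `d ≥ 1`, `α > 0` and `0 < β < d`. -/
theorem riesz_double_integral_finite (d : ℕ) (hd : 1 ≤ d) (α β : ℝ)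
    (hα : 0 < α) (hβ : 0 < β) (hβd : β < d) :
    IntegrableOn
      (fun yw : EuclideanSpace ℝ (Fin d) × EuclideanSpace ℝ (Fin d) =>
        ‖yw.1‖ ^ (-((d : ℝ) + α)) * ‖yw.2‖ ^ (-((d : ℝ) + α)) * ‖yw.1 - yw.2‖ ^ (-β))
      ({y : EuclideanSpace ℝ (Fin d) | 1 ≤ ‖y‖} ×ˢ
        {w : EuclideanSpace ℝ (Fin d) | 1 ≤ ‖w‖}) :=
  riesz_double_integral_finite_general (by simpa) (by simpa) hβ.le (by simpa) one_pos one_pos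
end

section
/- Let (Ω, ℱ, P) be a probability space and X ≥ 0 a random variable. Let 0 < β < α, A, ū, ν, t > 0, and suppose that for every real k ≥ 2 one has 𝔼[X^k] ≤ A^k ū^k exp(A k^{(2α−β)/(α−β)} ν^{−β/(α−β)} t). Then for every λ > 0 such that k* := [ (ν^{β/(α−β)}/(A t)) · ((α−β)/(2α−β)) · log(λ/(A ū)) ]^{(α−β)/α} ≥ 2, one has P(X > λ) ≤ exp( − c_{A,α,β} ν^{β/α} t^{−(α−β)/α} (log(λ/(A ū)))^{(2α−β)/α} ), where c_{A,α,β} := (α/(2α−β)) · [ (1/A) · ((α−β)/(2α−β)) ]^{(α−β)/α}. -/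
open MeasureTheory Real

/-!
Chebyshev's inequality at exponent `k` gives `P(X > λ) ≤ exp(c k^p - k L)` with `L = log (λ / M)`,
as soon as `𝔼[X^k] ≤ M^k exp(c k^p)`. If `p` and `q` are Hölder conjugate and `0 ≤ L`, the exponent
is minimal at `k* = (L / (c p))^(q - 1)`, where `c k*^p = k* L / p`; the minimum is therefore
`-k* L / q`. The theorem is the case `p = (2α - β) / (α - β)`, `q = (2α - β) / α`, `M = Aū` and
`c = A ν^{-β/(α-β)} t`.
-/

section RealPowers

-- Unlike `Real.mul_rpow`, this allows a negative second factor.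
theorem mul_rpow_of_pos_left {x : ℝ} (hx : 0 < x) (y z : ℝ) : (x * y) ^ z = x ^ z * y ^ z := by
  rcases le_or_gt 0 y with hy | hy
  · exact mul_rpow hx.le hy
  · rw [rpow_def_of_neg (mul_neg_of_pos_of_neg hx hy), rpow_def_of_neg hy, rpow_def_of_pos hx,
      log_mul hx.ne' hy.ne, add_mul, exp_add, mul_assoc]

theorem rpow_add_one_of_add_one_ne_zero (x : ℝ) {y : ℝ} (hy : y + 1 ≠ 0) :
    x ^ (y + 1) = x ^ y * x := by
  rcases eq_or_ne x 0 with rfl | hx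
  · rw [zero_rpow hy, mul_zero]
  · exact rpow_add_one hx y

theorem mul_rpow_div_mul_rpow_sub_one {p q c x : ℝ} (hpq : p.HolderConjugate q) (hc : 0 < c)
    (hx : 0 ≤ x) :
    c * ((x / (c * p)) ^ (q - 1)) ^ p = (x / (c * p)) ^ (q - 1) * x / p := by
  have hp : 0 < p := hpq.pos
  have hbase : 0 ≤ x / (c * p) := by positivity
  have hexp : (q - 1) * p = q - 1 + 1 := by rw [hpq.symm.sub_one_mul_conj, sub_add_cancel]
  rw [← rpow_mul hbase, hexp,
    rpow_add_one_of_add_one_ne_zero _ (by simpa using hpq.symm.ne_zero)]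
  field_simp

end RealPowers

section MomentTail

variable {Ω : Type*} [MeasurableSpace Ω] {μ : Measure Ω} {X : Ω → ℝ} {M lam k : ℝ}

theorem meas_lt_le_lintegral_rpow_div (hX : AEMeasurable X μ) (hlam : 0 < lam) (hk : 0 ≤ k) :
    μ {ω | lam < X ω} ≤
      (∫⁻ ω, ENNReal.ofReal (X ω) ^ k ∂μ) / ENNReal.ofReal (lam ^ k) := by
  have hsub : {ω | lam < X ω} ⊆ {ω | ENNReal.ofReal (lam ^ k) ≤ ENNReal.ofReal (X ω) ^ k} := by
    intro ω (hω : lam < X ω)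
    change ENNReal.ofReal (lam ^ k) ≤ ENNReal.ofReal (X ω) ^ k
    rw [← ENNReal.ofReal_rpow_of_pos hlam]
    gcongr
  have hlamk : ENNReal.ofReal (lam ^ k) ≠ 0 :=
    (ENNReal.ofReal_pos.mpr (rpow_pos_of_pos hlam k)).ne'
  exact (measure_mono hsub).trans
    (meas_ge_le_lintegral_div (hX.ennreal_ofReal.pow_const k) hlamk ENNReal.ofReal_ne_top)

theorem meas_lt_le_exp_of_lintegral_rpow_le (hX : AEMeasurable X μ) (hM : 0 < M) (hlam : 0 < lam)
    (hk : 0 ≤ k) {E : ℝ}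
    (hmom : ∫⁻ ω, ENNReal.ofReal (X ω) ^ k ∂μ ≤ ENNReal.ofReal (M ^ k * exp E)) :
    μ {ω | lam < X ω} ≤ ENNReal.ofReal (exp (E - k * log (lam / M))) := by
  have hpow : exp (k * log (lam / M)) = lam ^ k / M ^ k := by
    rw [← div_rpow hlam.le hM.le, rpow_def_of_pos (div_pos hlam hM), mul_comm]
  calc μ {ω | lam < X ω}
      ≤ (∫⁻ ω, ENNReal.ofReal (X ω) ^ k ∂μ) / ENNReal.ofReal (lam ^ k) :=
        meas_lt_le_lintegral_rpow_div hX hlam hk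
    _ ≤ ENNReal.ofReal (M ^ k * exp E) / ENNReal.ofReal (lam ^ k) := by gcongr
    _ = ENNReal.ofReal (M ^ k * exp E / lam ^ k) :=
        (ENNReal.ofReal_div_of_pos (rpow_pos_of_pos hlam k)).symm
    _ = ENNReal.ofReal (exp (E - k * log (lam / M))) := by
        rw [exp_sub, hpow, div_div_eq_mul_div, mul_comm (exp E)]

theorem meas_lt_le_exp_of_lintegral_rpow_le_exp_rpow (hX : AEMeasurable X μ) {p q c : ℝ}
    (hpq : p.HolderConjugate q) (hc : 0 < c) (hM : 0 < M) (hlam : M ≤ lam)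
    (hk : k = (log (lam / M) / (c * p)) ^ (q - 1))
    (hmom : ∫⁻ ω, ENNReal.ofReal (X ω) ^ k ∂μ ≤ ENNReal.ofReal (M ^ k * exp (c * k ^ p))) :
    μ {ω | lam < X ω} ≤ ENNReal.ofReal (exp (-(k * log (lam / M) / q))) := by
  have hp : 0 < p := hpq.pos
  have hlog : 0 ≤ log (lam / M) := log_nonneg ((one_le_div hM).mpr hlam)
  have hk_nonneg : 0 ≤ k := by rw [hk]; positivity
  have hexponent : c * k ^ p - k * log (lam / M) = -(k * log (lam / M) / q) := by
    have hopt : c * k ^ p = k * log (lam / M) / p := by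
      rw [hk]; exact mul_rpow_div_mul_rpow_sub_one hpq hc hlog
    rw [hopt, div_eq_mul_inv _ q, ← hpq.one_sub_inv]
    ring
  rw [← hexponent]
  exact meas_lt_le_exp_of_lintegral_rpow_le hX hM (hM.trans_le hlam) hk_nonneg hmom

end MomentTail

section Parameters

variable {α β : ℝ}

theorem holderConjugate_div_sub_div (hα : 0 < α) (hβα : β < α) :
    ((2 * α - β) / (α - β)).HolderConjugate ((2 * α - β) / α) := by
  have hsub : 0 < α - β := sub_pos.mpr hβα
  have hsum : 0 < 2 * α - β := by linarith
  refine holderConjugate_iff.mpr ⟨(one_lt_div hsub).mpr (by linarith), ?_⟩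
  field_simp
  ring

theorem tail_rate_eq_mul_log {A ν t : ℝ} (hα : 0 < α) (hβα : β < α) (hA : 0 < A) (hν : 0 < ν)
    (ht : 0 < t) (L : ℝ) :
    (α / (2 * α - β)) * ((1 / A) * ((α - β) / (2 * α - β))) ^ ((α - β) / α) * ν ^ (β / α) *
        t ^ (-((α - β) / α)) * L ^ ((2 * α - β) / α) =
      ((ν ^ (β / (α - β)) / (A * t)) * ((α - β) / (2 * α - β)) * L) ^ ((α - β) / α) * L /
        ((2 * α - β) / α) := by
  have hsub : 0 < α - β := sub_pos.mpr hβα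
  have hsum : 0 < 2 * α - β := by linarith
  have hbase : (ν ^ (β / (α - β)) / (A * t)) * ((α - β) / (2 * α - β)) =
      (1 / A) * ((α - β) / (2 * α - β)) * ν ^ (β / (α - β)) * t⁻¹ := by
    field_simp
  have hνexp : β / (α - β) * ((α - β) / α) = β / α := by field_simp
  have hLexp : (2 * α - β) / α = (α - β) / α + 1 := by field_simp; ring
  have hfactor : ((ν ^ (β / (α - β)) / (A * t)) * ((α - β) / (2 * α - β)) * L) ^ ((α - β) / α) =
      ((1 / A) * ((α - β) / (2 * α - β))) ^ ((α - β) / α) * ν ^ (β / α) *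
        t ^ (-((α - β) / α)) * L ^ ((α - β) / α) := by
    rw [hbase, mul_rpow_of_pos_left (by positivity), mul_rpow_of_pos_left (by positivity),
      mul_rpow_of_pos_left (by positivity), ← rpow_mul hν.le, hνexp, inv_rpow ht.le,
      rpow_neg ht.le]
  have hL : L ^ ((2 * α - β) / α) = L ^ ((α - β) / α) * L := by
    rw [hLexp, rpow_add_one_of_add_one_ne_zero L (by positivity)]
  rw [hfactor, hL, div_div_eq_mul_div]
  ring

theorem optimal_moment_base_eq {A ν t : ℝ} (hν : 0 < ν) (L : ℝ) :
    (ν ^ (β / (α - β)) / (A * t)) * ((α - β) / (2 * α - β)) * L =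
      L / (A * ν ^ (-(β / (α - β))) * t * ((2 * α - β) / (α - β))) := by
  rw [rpow_neg hν.le]
  simp only [div_eq_mul_inv, mul_inv, inv_inv]
  ring

end Parameters

theorem upper_tail_estimate_general {Ω : Type*} [MeasurableSpace Ω] (μ : Measure Ω)
    [IsProbabilityMeasure μ] {X : Ω → ℝ} (hX : AEMeasurable X μ) {α β A ubar ν t lam k : ℝ}
    (hα : 0 < α) (hβα : β < α) (hA : 0 < A) (hu : 0 < ubar) (hν : 0 < ν) (ht : 0 < t)
    (hlam : 0 < lam)
    (hk : k = ((ν ^ (β / (α - β)) / (A * t)) * ((α - β) / (2 * α - β)) *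
      log (lam / (A * ubar))) ^ ((α - β) / α))
    (hk_nonneg : 0 ≤ k)
    (hmom : ∫⁻ ω, ENNReal.ofReal (X ω) ^ k ∂μ ≤
      ENNReal.ofReal (A ^ k * ubar ^ k *
        exp (A * k ^ ((2 * α - β) / (α - β)) * ν ^ (-(β / (α - β))) * t))) :
    μ {ω | lam < X ω} ≤
      ENNReal.ofReal (exp (-((α / (2 * α - β)) *
        ((1 / A) * ((α - β) / (2 * α - β))) ^ ((α - β) / α) *
        ν ^ (β / α) * t ^ (-((α - β) / α)) *
        log (lam / (A * ubar)) ^ ((2 * α - β) / α)))) := by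
  have hpq := holderConjugate_div_sub_div hα hβα
  have hM : 0 < A * ubar := mul_pos hA hu
  rw [tail_rate_eq_mul_log hα hβα hA hν ht, ← hk]
  rcases le_total (A * ubar) lam with hle | hle
  · have hq : (α - β) / α = (2 * α - β) / α - 1 := by field_simp; ring
    refine meas_lt_le_exp_of_lintegral_rpow_le_exp_rpow hX hpq
      (c := A * ν ^ (-(β / (α - β))) * t) (by positivity) hM hle ?_ ?_
    · rw [hk, optimal_moment_base_eq hν, hq]
    · rw [mul_rpow hA.le hu.le]
      convert hmom using 4
      ring
  · -- `k` can be nonnegative here, as a junk power of a negative base; the bound is then trivial.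
    have hlog : log (lam / (A * ubar)) ≤ 0 :=
      log_nonpos (by positivity) ((div_le_one hM).mpr hle)
    have hrate : k * log (lam / (A * ubar)) / ((2 * α - β) / α) ≤ 0 :=
      div_nonpos_of_nonpos_of_nonneg (mul_nonpos_of_nonneg_of_nonpos hk_nonneg hlog)
        hpq.symm.nonneg
    exact prob_le_one.trans (ENNReal.one_le_ofReal.mpr (one_le_exp (neg_nonneg.mpr hrate)))

/-- Abstract upper tail estimate (Lemma 4.1): if a nonnegative random variable `X`
satisfies `𝔼[X^k] ≤ A^k ū^k exp(A k^{(2α-β)/(α-β)} ν^{-β/(α-β)} t)` for all real `k ≥ 2`,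
then for every `λ > 0` whose optimizing exponent `k*` is at least `2`,
`P(X > λ) ≤ exp(-c_{A,α,β} ν^{β/α} t^{-(α-β)/α} (log(λ/(Aū)))^{(2α-β)/α})`. -/
theorem upper_tail_estimate {Ω : Type*} [MeasurableSpace Ω] (μ : Measure Ω)
    [IsProbabilityMeasure μ] (X : Ω → ℝ) (hXm : Measurable X) (hX : ∀ ω, 0 ≤ X ω)
    (α β A ubar ν t : ℝ) (hβ : 0 < β) (hβα : β < α) (hA : 0 < A) (hu : 0 < ubar)
    (hν : 0 < ν) (ht : 0 < t)
    (hmom : ∀ k : ℝ, 2 ≤ k →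
      (∫⁻ ω, ENNReal.ofReal (X ω ^ k) ∂μ)
        ≤ ENNReal.ofReal (A ^ k * ubar ^ k *
            Real.exp (A * k ^ ((2 * α - β) / (α - β)) * ν ^ (-(β / (α - β))) * t)))
    (lam : ℝ) (hlam : 0 < lam)
    (hkstar : 2 ≤ ((ν ^ (β / (α - β)) / (A * t)) * ((α - β) / (2 * α - β)) *
        Real.log (lam / (A * ubar))) ^ ((α - β) / α)) :
    μ {ω | lam < X ω}
      ≤ ENNReal.ofReal (Real.exp (-((α / (2 * α - β)) *
          ((1 / A) * ((α - β) / (2 * α - β))) ^ ((α - β) / α) *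
          ν ^ (β / α) * t ^ (-((α - β) / α)) *
          Real.log (lam / (A * ubar)) ^ ((2 * α - β) / α)))) := by
  have hk_nonneg := zero_le_two.trans hkstar
  exact upper_tail_estimate_general μ hXm.aemeasurable (hβ.trans hβα) hβα hA hu hν ht hlam rfl
    hk_nonneg (by simpa only [ENNReal.ofReal_rpow_of_nonneg (hX _) hk_nonneg] using hmom _ hkstar)
end

section
/- Let (Ω, ℱ, P) be a probability space and X ≥ 0 a random variable. Let 0 < β < α, A > 0, ν, t > 0, 0 < u ≤ ū, and k₀ ≥ 2, and suppose that for every real k ≥ k₀ one has (u/A)^k exp( k^{(2α−β)/(α−β)} ν^{−β/(α−β)} t / A ) ≤ 𝔼[X^k] ≤ A^k ū^k exp( A k^{(2α−β)/(α−β)} ν^{−β/(α−β)} t ). Then for every k ≥ k₀, setting λ := (u/(2A)) exp( t k^{α/(α−β)} ν^{−β/(α−β)} / A ), one has P(X ≥ λ) ≥ (1/4) exp( − c_{A,α,β} k^{(2α−β)/(α−β)} ν^{−β/(α−β)} t + k log(ũ⁴/A⁸) ), where c_{A,α,β} := 2^{(2α−β)/(α−β)} [ A·2^{(2α−β)/(α−β)}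 − 2/A ] and ũ := u/ū. -/
/-!
Write `r = α / (α - β)`, so that `(2α - β) / (α - β) = r + 1`, and apply the Paley–Zygmund
inequality to `X ^ (2k)`. The level `λ` is admissible, i.e. `λ ^ (2k)` is at most half the lower
bound on `𝔼[X ^ (2k)]`, because `2k * k ^ r ≤ (2k) ^ (r + 1)` and `(1 / 2) ^ (2k) ≤ 1 / 2`. The
constant `c_{A,α,β}` comes from the exponent `2 (2k) ^ (r + 1) / A - A (4k) ^ (r + 1)` in the
quotient of the squared lower bound of order `2k` by the upper bound of order `4k`.
-/

open MeasureTheory Real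

section PaleyZygmund

variable {Ω : Type*} [MeasurableSpace Ω] {μ : Measure Ω}

theorem sq_lintegral_le_lintegral_sq_mul_measure_univ {f : Ω → ENNReal} (hf : AEMeasurable f μ) :
    (∫⁻ ω, f ω ∂μ) ^ 2 ≤ (∫⁻ ω, f ω ^ 2 ∂μ) * μ Set.univ := by
  have holder := ENNReal.lintegral_mul_le_Lp_mul_Lq μ HolderConjugate.two_two hf
    (aemeasurable_const (b := 1))
  simp only [Pi.mul_apply, mul_one, ENNReal.rpow_ofNat, one_pow, lintegral_one, one_div] at holder
  rwa [← ENNReal.mul_rpow_of_nonneg _ _ (by norm_num), ENNReal.le_rpow_inv_iff two_pos,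
    ENNReal.rpow_ofNat] at holder

/-- The Paley–Zygmund inequality, with subtraction in `ENNReal` truncated at `0`. -/
theorem sq_lintegral_sub_le_lintegral_sq_mul_measure {f : Ω → ENNReal} (hf : AEMeasurable f μ)
    (c : ENNReal) :
    ((∫⁻ ω, f ω ∂μ) - c * μ Set.univ) ^ 2 ≤ (∫⁻ ω, f ω ^ 2 ∂μ) * μ {ω | c ≤ f ω} := by
  set S := {ω | c ≤ f ω}
  have hS : NullMeasurableSet S μ := nullMeasurableSet_le aemeasurable_const hf
  have split (ω : Ω) : f ω ≤ c + S.indicator f ω := by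
    by_cases hω : ω ∈ S
    · simp [hω]
    · simpa [hω] using (not_le.1 hω).le
  have excess : (∫⁻ ω, f ω ∂μ) - c * μ Set.univ ≤ ∫⁻ ω in S, f ω ∂μ := by
    rw [tsub_le_iff_left, ← lintegral_indicator₀ hS, ← lintegral_const,
      ← lintegral_add_left measurable_const]
    exact lintegral_mono split
  calc ((∫⁻ ω, f ω ∂μ) - c * μ Set.univ) ^ 2
      ≤ (∫⁻ ω in S, f ω ∂μ) ^ 2 := by gcongr
    _ ≤ (∫⁻ ω in S, f ω ^ 2 ∂μ) * μ S := by
      simpa using sq_lintegral_le_lintegral_sq_mul_measure_univ hf.restrict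
    _ ≤ (∫⁻ ω, f ω ^ 2 ∂μ) * μ S := by
      gcongr ?_ * _
      exact setLIntegral_le_lintegral S _

theorem ofReal_sq_div_le_measure_of_rpow_moments [IsProbabilityMeasure μ] {X : Ω → ℝ}
    (hXm : AEMeasurable X μ) (hX : ∀ᵐ ω ∂μ, 0 ≤ X ω) {l m q p : ℝ} (hp : 0 < p) (hl : 0 ≤ l)
    (hq : 0 < q) (hlm : l ^ p ≤ m / 2)
    (hlow : ENNReal.ofReal m ≤ ∫⁻ ω, ENNReal.ofReal (X ω ^ p) ∂μ)
    (hupp : ∫⁻ ω, ENNReal.ofReal (X ω ^ (2 * p)) ∂μ ≤ ENNReal.ofReal q) :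
    ENNReal.ofReal (m ^ 2 / (4 * q)) ≤ μ {ω | l ≤ X ω} := by
  have hlp : 0 ≤ l ^ p := rpow_nonneg hl p
  have half_le : ENNReal.ofReal (m / 2) ≤
      (∫⁻ ω, ENNReal.ofReal (X ω ^ p) ∂μ) - ENNReal.ofReal (l ^ p) :=
    calc ENNReal.ofReal (m / 2) ≤ ENNReal.ofReal (m - l ^ p) := by gcongr; linarith
      _ = ENNReal.ofReal m - ENNReal.ofReal (l ^ p) := ENNReal.ofReal_sub m hlp
      _ ≤ _ := by gcongr
  have sq_le : ∫⁻ ω, ENNReal.ofReal (X ω ^ p) ^ 2 ∂μ ≤ ENNReal.ofReal q := by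
    refine (lintegral_congr_ae ?_).trans_le hupp
    filter_upwards [hX] with ω hω
    rw [← ENNReal.ofReal_pow (rpow_nonneg hω p), ← rpow_mul_natCast hω, mul_comm p, Nat.cast_two]
  have level_le : μ {ω | ENNReal.ofReal (l ^ p) ≤ ENNReal.ofReal (X ω ^ p)} ≤ μ {ω | l ≤ X ω} := by
    refine measure_mono_ae ?_
    filter_upwards [hX] with ω hω hle
    exact (rpow_le_rpow_iff hl hω hp).1 ((ENNReal.ofReal_le_ofReal_iff (rpow_nonneg hω p)).1 hle)
  rw [show m ^ 2 / (4 * q) = (m / 2) ^ 2 / q by ring, ENNReal.ofReal_div_of_pos hq,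
    ENNReal.ofReal_pow (by linarith)]
  refine ENNReal.div_le_of_le_mul' ?_
  calc ENNReal.ofReal (m / 2) ^ 2
      ≤ ((∫⁻ ω, ENNReal.ofReal (X ω ^ p) ∂μ) - ENNReal.ofReal (l ^ p)) ^ 2 := by gcongr
    _ ≤ (∫⁻ ω, ENNReal.ofReal (X ω ^ p) ^ 2 ∂μ) *
          μ {ω | ENNReal.ofReal (l ^ p) ≤ ENNReal.ofReal (X ω ^ p)} := by
      simpa using sq_lintegral_sub_le_lintegral_sq_mul_measure
        (hXm.pow_const p).ennreal_ofReal (ENNReal.ofReal (l ^ p))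
    _ ≤ ENNReal.ofReal q * μ {ω | l ≤ X ω} := by gcongr

end PaleyZygmund

section MomentBounds

theorem div_rpow_le_rpow_div {a c p : ℝ} (ha : 0 ≤ a) (hc : 1 ≤ c) (hp : 1 ≤ p) :
    (a / c) ^ p ≤ a ^ p / c := by
  rw [div_rpow ha (zero_le_one.trans hc)]
  gcongr
  exact self_le_rpow_of_one_le hc hp

theorem mul_mul_rpow_le_mul_rpow_add_one {c k r : ℝ} (hc : 1 ≤ c) (hk : 0 ≤ k) (hr : 0 ≤ r) :
    c * k * k ^ r ≤ (c * k) ^ (r + 1) := by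
  rw [rpow_add_one' (by positivity) (by positivity), mul_comm]
  gcongr
  exact le_mul_of_one_le_left hk hc

theorem div_two_mul_exp_rpow_le {a κ k r : ℝ} (ha : 0 ≤ a) (hκ : 0 ≤ κ) (hr : 0 ≤ r)
    (hk : 1 / 2 ≤ k) :
    (a / 2 * exp (κ * k ^ r)) ^ (2 * k) ≤ a ^ (2 * k) * exp (κ * (2 * k) ^ (r + 1)) / 2 := by
  calc (a / 2 * exp (κ * k ^ r)) ^ (2 * k)
      = (a / 2) ^ (2 * k) * exp (κ * (2 * k * k ^ r)) := by
        rw [mul_rpow (by positivity) (exp_pos _).le, ← exp_mul]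
        ring_nf
    _ ≤ a ^ (2 * k) / 2 * exp (κ * (2 * k) ^ (r + 1)) := by
        gcongr
        · exact div_rpow_le_rpow_div ha one_le_two (by linarith)
        · exact mul_mul_rpow_le_mul_rpow_add_one one_le_two (by linarith) hr
    _ = a ^ (2 * k) * exp (κ * (2 * k) ^ (r + 1)) / 2 := by ring

variable {A u ubar : ℝ} (hA : 0 < A) (hu : 0 < u) (hubar : 0 < ubar) (k : ℝ)
include hA hu hubar

theorem sq_div_rpow_eq_exp_mul_log :
    ((u / A) ^ (2 * k)) ^ 2 / (A ^ (4 * k) * ubar ^ (4 * k)) =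
      exp (k * log ((u / ubar) ^ 4 / A ^ 8)) := by
  have hbase : (u / ubar) ^ 4 / A ^ 8 = ((u / A) / (A * ubar)) ^ 4 := by field_simp
  calc ((u / A) ^ (2 * k)) ^ 2 / (A ^ (4 * k) * ubar ^ (4 * k))
      = (u / A / (A * ubar)) ^ (4 * k) := by
        rw [← rpow_mul_natCast (by positivity), ← mul_rpow hA.le hubar.le,
          div_rpow (x := u / A) (by positivity) (by positivity)]
        ring_nf
    _ = ((u / A / (A * ubar)) ^ 4) ^ k := by
        rw [← rpow_natCast_mul (by positivity), Nat.cast_ofNat]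
    _ = exp (k * log ((u / ubar) ^ 4 / A ^ 8)) := by
        rw [hbase, rpow_def_of_pos (by positivity), mul_comm]

theorem sq_div_moment_bounds_eq {p c t : ℝ} (hk : 0 ≤ k) :
    ((u / A) ^ (2 * k) * exp ((2 * k) ^ p * c * t / A)) ^ 2 /
        (4 * (A ^ (4 * k) * ubar ^ (4 * k) * exp (A * (4 * k) ^ p * c * t))) =
      1 / 4 * exp (-(2 ^ p * (A * 2 ^ p - 2 / A)) * k ^ p * c * t +
        k * log ((u / ubar) ^ 4 / A ^ 8)) := by
  have hfour : (4 * k) ^ p = 2 ^ p * 2 ^ p * k ^ p := by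
    rw [mul_rpow (by norm_num) hk, ← mul_rpow zero_le_two zero_le_two]
    norm_num
  have hexp : exp ((2 * k) ^ p * c * t / A) ^ 2 / exp (A * (4 * k) ^ p * c * t) =
      exp (-(2 ^ p * (A * 2 ^ p - 2 / A)) * k ^ p * c * t) := by
    rw [← exp_nat_mul, ← exp_sub, mul_rpow zero_le_two hk, hfour]
    congr 1
    push_cast
    ring
  rw [exp_add, ← hexp, ← sq_div_rpow_eq_exp_mul_log hA hu hubar k]
  ring

end MomentBounds

theorem lower_tail_estimate_general {Ω : Type*} [MeasurableSpace Ω] (μ : Measure Ω)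
    [IsProbabilityMeasure μ] (X : Ω → ℝ) (hXm : AEMeasurable X μ) (hX : ∀ᵐ ω ∂μ, 0 ≤ X ω)
    (α β A u ubar ν t k : ℝ) (hα : 0 ≤ α) (hβα : β < α) (hA : 0 < A) (hu : 0 < u)
    (hubar : 0 < ubar) (hν : 0 < ν) (ht : 0 ≤ t) (hk : 1 / 2 ≤ k)
    (hlow : ENNReal.ofReal ((u / A) ^ (2 * k) *
          exp ((2 * k) ^ ((2 * α - β) / (α - β)) * ν ^ (-(β / (α - β))) * t / A))
        ≤ ∫⁻ ω, ENNReal.ofReal (X ω ^ (2 * k)) ∂μ)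
    (hupp : ∫⁻ ω, ENNReal.ofReal (X ω ^ (4 * k)) ∂μ
        ≤ ENNReal.ofReal (A ^ (4 * k) * ubar ^ (4 * k) *
          exp (A * (4 * k) ^ ((2 * α - β) / (α - β)) * ν ^ (-(β / (α - β))) * t))) :
    ENNReal.ofReal (1 / 4 * exp
        (-(2 ^ ((2 * α - β) / (α - β)) * (A * 2 ^ ((2 * α - β) / (α - β)) - 2 / A)) *
            k ^ ((2 * α - β) / (α - β)) * ν ^ (-(β / (α - β))) * t
          + k * log ((u / ubar) ^ 4 / A ^ 8)))
      ≤ μ {ω | u / (2 * A) *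
          exp (t * k ^ (α / (α - β)) * ν ^ (-(β / (α - β))) / A) ≤ X ω} := by
  have hαβ : 0 < α - β := sub_pos.2 hβα
  have hr : 0 ≤ α / (α - β) := by positivity
  have hp : (2 * α - β) / (α - β) = α / (α - β) + 1 := by field_simp; ring
  have hlevel := div_two_mul_exp_rpow_le (a := u / A) (κ := ν ^ (-(β / (α - β))) * t / A)
    (by positivity) (by positivity) hr hk
  rw [← hp] at hlevel
  rw [← sq_div_moment_bounds_eq hA hu hubar k (by linarith)]
  refine ofReal_sq_div_le_measure_of_rpow_moments hXm hX (p := 2 * k) (by linarith)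
    (by positivity) (by positivity) ?_ hlow ?_
  · convert hlevel using 3 <;> ring_nf
  · convert hupp using 5; ring

/-- Abstract lower tail estimate (Lemma 4.2, inequality (aux1)): if a nonnegative random
variable `X` satisfies the two-sided moment bounds
`(u/A)^k exp(k^{(2α-β)/(α-β)} ν^{-β/(α-β)} t / A) ≤ 𝔼[X^k] ≤ A^k ū^k exp(A k^{(2α-β)/(α-β)} ν^{-β/(α-β)} t)`
for all real `k ≥ k₀`, then for each `k ≥ k₀` and `λ := (u/(2A)) exp(t k^{α/(α-β)} ν^{-β/(α-β)}/A)`,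
`P(X ≥ λ) ≥ (1/4) exp(-c_{A,α,β} k^{(2α-β)/(α-β)} ν^{-β/(α-β)} t + k log(ũ⁴/A⁸))`, where
`c_{A,α,β} = 2^{(2α-β)/(α-β)}[A 2^{(2α-β)/(α-β)} - 2/A]` and `ũ = u/ū`. -/
theorem lower_tail_estimate {Ω : Type*} [MeasurableSpace Ω] (μ : Measure Ω)
    [IsProbabilityMeasure μ] (X : Ω → ℝ) (hXm : Measurable X) (hX : ∀ ω, 0 ≤ X ω)
    (α β A u ubar ν t k₀ : ℝ) (hβ : 0 < β) (hβα : β < α) (hA : 0 < A)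
    (hu : 0 < u) (huu : u ≤ ubar) (hν : 0 < ν) (ht : 0 < t) (hk₀ : 2 ≤ k₀)
    (hmom : ∀ k : ℝ, k₀ ≤ k →
      ENNReal.ofReal ((u / A) ^ k *
          Real.exp (k ^ ((2 * α - β) / (α - β)) * ν ^ (-(β / (α - β))) * t / A))
        ≤ (∫⁻ ω, ENNReal.ofReal (X ω ^ k) ∂μ) ∧
      (∫⁻ ω, ENNReal.ofReal (X ω ^ k) ∂μ)
        ≤ ENNReal.ofReal (A ^ k * ubar ^ k *
            Real.exp (A * k ^ ((2 * α - β) / (α - β)) * ν ^ (-(β / (α - β))) * t))) :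
    ∀ k : ℝ, k₀ ≤ k →
      ENNReal.ofReal ((1 / 4) * Real.exp
          (-(2 ^ ((2 * α - β) / (α - β)) * (A * 2 ^ ((2 * α - β) / (α - β)) - 2 / A)) *
              k ^ ((2 * α - β) / (α - β)) * ν ^ (-(β / (α - β))) * t
            + k * Real.log ((u / ubar) ^ 4 / A ^ 8)))
        ≤ μ {ω | (u / (2 * A)) *
            Real.exp (t * k ^ (α / (α - β)) * ν ^ (-(β / (α - β))) / A) ≤ X ω} :=
  fun k hk ↦ lower_tail_estimate_general μ X hXm.aemeasurable (.of_forall hX) α β A u ubar ν t k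
    (hβ.trans hβα).le hβα hA hu (hu.trans_le huu) hν ht.le (by linarith)
    (hmom (2 * k) (by linarith)).1 (hmom (4 * k) (by linarith)).2
end

section
/- Let d = 1 and α ∈ (0,1), and fix t > 0. Then there exists a constant c > 0 such that for every integer m ≥ 2 and every s with t/(2m) ≤ s ≤ t/m, setting x := 1 + 1/m, one has ∫₀¹ p_s(x−y) dy ≤ c m^{α−1}. In particular this quantity tends to 0 as m → ∞. -/
open MeasureTheory Real

/-- The one-dimensional heat kernel of the fractional Laplacian `-ν(-Δ)^(α/2)`:
`p_t(x) = (2π)^{-1} ∫_ℝ e^{-i x z} e^{-tν|z|^α} dz`. -/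
noncomputable def stableKernel1 (ν α t x : ℝ) : ℝ :=
  (2 * Real.pi)⁻¹ *
    (∫ z : ℝ, Complex.exp (-(Complex.I * (x * z : ℝ))) *
        Complex.exp (-((t * ν * |z| ^ α : ℝ) : ℂ))).re

/-!
For `α ≤ 1` the function `f z = exp (-a z ^ α)` is convex on `(0, ∞)`. Integrating by parts twice,
with `1 + cos` as the second primitive of `-cos` so that the boundary terms at `π / x` vanish, shows
that `∫ cos (x z) f z` over `(π / x, ∞)` is nonpositive. On `(0, π / x)` the constant `1` may be
subtracted from `f` because `cos (x z)` has mean zero there, and `1 - f z ≤ a z ^ α`. With `a = s ν`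
this gives `p_s(x) ≤ C s x ^ (-(α + 1))`; integrating from `x = 1 / m` on yields `C s m ^ α`, and
`s ≤ t / m`.
-/

open Filter Set Topology

section CosineIntegral

variable {f f' f'' : ℝ → ℝ} {x : ℝ}

/-- A primitive of `z ↦ cos (x * z) * f z` up to the error `(1 + cos (x * z)) * f'' z / x ^ 2`,
where `f'` stands for the derivative of `f`. It comes from two integrations by parts, with the
constant of the second one chosen so that the error is nonnegative for convex `f`. -/
noncomputable def cosPrimitive (f f' : ℝ → ℝ) (x z : ℝ) : ℝ :=
  sin (x * z) * f z / x + (1 + cos (x * z)) * f' z / x ^ 2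

lemma hasDerivAt_cosPrimitive {z f₂ : ℝ} (hx : x ≠ 0) (hf : HasDerivAt f (f' z) z)
    (hf' : HasDerivAt f' f₂ z) :
    HasDerivAt (cosPrimitive f f' x)
      (cos (x * z) * f z + (1 + cos (x * z)) * f₂ / x ^ 2) z := by
  have hmul : HasDerivAt (fun z : ℝ => x * z) x z := by
    simpa using (hasDerivAt_id z).const_mul x
  have h := ((hmul.sin.mul hf).div_const x).add
    (((hmul.cos.const_add 1).mul hf').div_const (x ^ 2))
  refine h.congr_deriv ?_
  field_simp
  ring

lemma tendsto_cosPrimitive (x : ℝ) (hf : Tendsto f atTop (𝓝 0)) (hf' : Tendsto f' atTop (𝓝 0)) :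
    Tendsto (cosPrimitive f f' x) atTop (𝓝 0) := by
  have hsin : Tendsto (fun z => sin (x * z) * f z) atTop (𝓝 0) :=
    bdd_le_mul_tendsto_zero (.of_forall fun z => neg_one_le_sin _)
      (.of_forall fun z => sin_le_one _) hf
  have hcos : Tendsto (fun z => (1 + cos (x * z)) * f' z) atTop (𝓝 0) :=
    bdd_le_mul_tendsto_zero
      (.of_forall fun z => add_le_add_right (neg_one_le_cos _) 1)
      (.of_forall fun z => add_le_add_right (cos_le_one _) 1) hf'
  have h := (hsin.div_const x).add (hcos.div_const (x ^ 2))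
  rwa [zero_div, zero_div, add_zero] at h

lemma cosPrimitive_pi_div (hx : x ≠ 0) : cosPrimitive f f' x (π / x) = 0 := by
  simp [cosPrimitive, mul_div_cancel₀ π hx]

lemma integrableOn_cos_mul {s : Set ℝ} (hf : IntegrableOn f s) (x : ℝ) :
    IntegrableOn (fun z => cos (x * z) * f z) s :=
  hf.bdd_mul (by fun_prop) (.of_forall fun z => abs_cos_le_one (x * z))

lemma integral_Ioi_cos_mul_nonpos (hx : 0 < x) (hint : IntegrableOn f (Ioi (π / x)))
    (hf : ∀ z ∈ Ici (π / x), HasDerivAt f (f' z) z)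
    (hf' : ∀ z ∈ Ici (π / x), HasDerivAt f' (f'' z) z) (hf'' : ∀ z ∈ Ioi (π / x), 0 ≤ f'' z)
    (hlim : Tendsto f atTop (𝓝 0)) (hlim' : Tendsto f' atTop (𝓝 0)) :
    ∫ z in Ioi (π / x), cos (x * z) * f z ≤ 0 := by
  have hcos := integrableOn_cos_mul hint x
  refine le_of_tendsto_of_tendsto (intervalIntegral_tendsto_integral_Ioi _ hcos tendsto_id)
    (tendsto_cosPrimitive x hlim hlim') ?_
  filter_upwards [eventually_ge_atTop (π / x)] with b hb
  have hderiv (z : ℝ) (hz : z ∈ Ici (π / x)) :=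
    hasDerivAt_cosPrimitive hx.ne' (hf z hz) (hf' z hz)
  have hle (z : ℝ) (hz : z ∈ Ioi (π / x)) :
      cos (x * z) * f z ≤ cos (x * z) * f z + (1 + cos (x * z)) * f'' z / x ^ 2 := by
    have : 0 ≤ 1 + cos (x * z) := by linarith [neg_one_le_cos (x * z)]
    have := hf'' z hz
    exact le_add_of_nonneg_right (by positivity)
  calc ∫ z in π / x..b, cos (x * z) * f z
      ≤ cosPrimitive f f' x b - cosPrimitive f f' x (π / x) :=
        intervalIntegral.integral_le_sub_of_hasDeriv_right_of_le hb
          (fun z hz => (hderiv z hz.1).continuousAt.continuousWithinAt)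
          (fun z hz => (hderiv z (mem_Ici_of_Ioi hz.1)).hasDerivWithinAt)
          ((Iff.mpr integrableOn_Ici_iff_integrableOn_Ioi hcos).mono_set Icc_subset_Ici_self)
          (fun z hz => hle z hz.1)
    _ = cosPrimitive f f' x b := by rw [cosPrimitive_pi_div hx.ne', sub_zero]

lemma integral_cos_mul_zero_pi_div (hx : x ≠ 0) : ∫ z in 0..π / x, cos (x * z) = 0 := by
  simp [intervalIntegral.integral_comp_mul_left (fun z => cos z) hx, mul_div_cancel₀ π hx]

lemma integral_cos_mul_le_integral_const_sub {C : ℝ} (hx : 0 < x)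
    (hint : IntervalIntegrable f volume 0 (π / x)) (hC : ∀ z ∈ Ioo 0 (π / x), f z ≤ C) :
    ∫ z in 0..π / x, cos (x * z) * f z ≤ ∫ z in 0..π / x, (C - f z) := by
  have hcos : IntervalIntegrable (fun z => C * cos (x * z)) volume 0 (π / x) :=
    Continuous.intervalIntegrable (by fun_prop) _ _
  have hsub : IntervalIntegrable (fun z => C - f z) volume 0 (π / x) :=
    intervalIntegrable_const.sub hint
  calc ∫ z in 0..π / x, cos (x * z) * f z
      ≤ ∫ z in 0..π / x, (C * cos (x * z) + (C - f z)) := by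
        refine intervalIntegral.integral_mono_on_of_le_Ioo (by positivity)
          (hint.continuousOn_mul (by fun_prop)) (hcos.add hsub) fun z hz => ?_
        nlinarith [hC z hz, neg_one_le_cos (x * z)]
    _ = ∫ z in 0..π / x, (C - f z) := by
        rw [intervalIntegral.integral_add hcos hsub, intervalIntegral.integral_const_mul,
          integral_cos_mul_zero_pi_div hx.ne', mul_zero, zero_add]

lemma integral_Ioi_cos_mul_le {C : ℝ} (hx : 0 < x) (hint : IntegrableOn f (Ioi 0))
    (hf : ∀ z ∈ Ioi 0, HasDerivAt f (f' z) z) (hf' : ∀ z ∈ Ioi 0, HasDerivAt f' (f'' z) z)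
    (hf'' : ∀ z ∈ Ioi 0, 0 ≤ f'' z) (hlim : Tendsto f atTop (𝓝 0))
    (hlim' : Tendsto f' atTop (𝓝 0)) (hC : ∀ z ∈ Ioo 0 (π / x), f z ≤ C) :
    ∫ z in Ioi 0, cos (x * z) * f z ≤ ∫ z in 0..π / x, (C - f z) := by
  have hpos : 0 < π / x := by positivity
  have htail : IntegrableOn f (Ioi (π / x)) := hint.mono_set (Ioi_subset_Ioi hpos.le)
  have hhead : IntervalIntegrable f volume 0 (π / x) :=
    (intervalIntegrable_iff_integrableOn_Ioc_of_le hpos.le).2 (hint.mono_set Ioc_subset_Ioi_self)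
  have hmem (z : ℝ) (hz : z ∈ Ici (π / x)) : z ∈ Ioi 0 := hpos.trans_le hz
  rw [← intervalIntegral.integral_interval_add_Ioi (integrableOn_cos_mul hint x)
    (integrableOn_cos_mul htail x)]
  have h₁ := integral_cos_mul_le_integral_const_sub hx hhead hC
  have h₂ := integral_Ioi_cos_mul_nonpos hx htail (fun z hz => hf z (hmem z hz))
    (fun z hz => hf' z (hmem z hz)) (fun z hz => hf'' z (hpos.trans hz)) hlim hlim'
  linarith

end CosineIntegral

section StretchedExponential

variable {a α x : ℝ}

lemma hasDerivAt_exp_neg_mul_rpow {z : ℝ} (hz : z ≠ 0) :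
    HasDerivAt (fun z : ℝ => exp (-a * z ^ α))
      (-(a * α) * (z ^ (α - 1) * exp (-a * z ^ α))) z := by
  refine ((hasDerivAt_rpow_const (Or.inl hz)).const_mul (-a)).exp.congr_deriv ?_
  ring

lemma hasDerivAt_rpow_mul_exp_neg_mul_rpow {z : ℝ} (hz : 0 < z) :
    HasDerivAt (fun z : ℝ => -(a * α) * (z ^ (α - 1) * exp (-a * z ^ α)))
      (a * α * ((1 - α) * z ^ (α - 2) + a * α * (z ^ (α - 1)) ^ 2) * exp (-a * z ^ α)) z := by
  refine (((hasDerivAt_rpow_const (Or.inl hz.ne')).mul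
    (hasDerivAt_exp_neg_mul_rpow hz.ne')).const_mul (-(a * α))).congr_deriv ?_
  rw [show α - 1 - 1 = α - 2 by ring]
  ring

lemma tendsto_rpow_mul_exp_neg_mul_rpow (q : ℝ) (ha : 0 < a) (hα : 0 < α) :
    Tendsto (fun z : ℝ => z ^ q * exp (-a * z ^ α)) atTop (𝓝 0) := by
  refine ((tendsto_rpow_mul_exp_neg_mul_atTop_nhds_zero (q / α) a ha).comp
    (tendsto_rpow_atTop hα)).congr' ?_
  filter_upwards [eventually_ge_atTop 0] with z hz
  simp only [Function.comp_apply, ← rpow_mul hz, mul_div_cancel₀ q hα.ne']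

lemma tendsto_exp_neg_mul_rpow (ha : 0 < a) (hα : 0 < α) :
    Tendsto (fun z : ℝ => exp (-a * z ^ α)) atTop (𝓝 0) := by
  simpa using tendsto_rpow_mul_exp_neg_mul_rpow 0 ha hα

lemma integrableOn_exp_neg_mul_rpow (ha : 0 < a) (hα : 0 < α) :
    IntegrableOn (fun z : ℝ => exp (-a * z ^ α)) (Ioi 0) := by
  simpa using integrableOn_rpow_mul_exp_neg_mul_rpow (s := 0) (by norm_num) hα ha

lemma integrable_exp_neg_mul_abs_rpow (ha : 0 < a) (hα : 0 < α) :
    Integrable (fun z : ℝ => exp (-a * |z| ^ α)) := by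
  simpa using (integrable_fun_norm_addHaar volume (E := ℝ) (f := fun r : ℝ => exp (-a * r ^ α))).2
    (by simpa using integrableOn_exp_neg_mul_rpow ha hα)

lemma integral_one_sub_exp_neg_mul_rpow_le {T : ℝ} (hα : 0 < α) (hT : 0 ≤ T) :
    ∫ z in 0..T, (1 - exp (-a * z ^ α)) ≤ a * (T ^ (α + 1) / (α + 1)) := by
  have hcont : Continuous fun z : ℝ => z ^ α := continuous_rpow_const hα.le
  calc ∫ z in 0..T, (1 - exp (-a * z ^ α))
      ≤ ∫ z in 0..T, a * z ^ α := by
        refine intervalIntegral.integral_mono_on hT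
          (Continuous.intervalIntegrable (by fun_prop) _ _)
          (Continuous.intervalIntegrable (by fun_prop) _ _) fun z _ => ?_
        linarith [add_one_le_exp (-a * z ^ α)]
    _ = a * (T ^ (α + 1) / (α + 1)) := by
        rw [intervalIntegral.integral_const_mul, integral_rpow (Or.inl (by linarith)),
          zero_rpow (by linarith), sub_zero]

lemma integral_cos_mul_exp_neg_mul_rpow_le (ha : 0 < a) (hα : 0 < α) (hα1 : α ≤ 1) (hx : 0 < x) :
    ∫ z in Ioi 0, cos (x * z) * exp (-a * z ^ α) ≤ a * ((π / x) ^ (α + 1) / (α + 1)) := by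
  refine (integral_Ioi_cos_mul_le (C := 1) hx (integrableOn_exp_neg_mul_rpow ha hα)
    (fun z hz => hasDerivAt_exp_neg_mul_rpow (ne_of_gt hz))
    (fun z hz => hasDerivAt_rpow_mul_exp_neg_mul_rpow hz) (fun z hz => ?_)
    (tendsto_exp_neg_mul_rpow ha hα) ?_ fun z hz => ?_).trans
    (integral_one_sub_exp_neg_mul_rpow_le hα (by positivity))
  · have : 0 < z := hz
    have : 0 ≤ 1 - α := by linarith
    positivity
  · simpa using (tendsto_rpow_mul_exp_neg_mul_rpow (α - 1) ha hα).const_mul (-(a * α))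
  · have := rpow_nonneg hz.1.le α
    exact exp_le_one_iff.2 (by nlinarith)

end StretchedExponential

section StableKernel

variable {ν α s x δ : ℝ}

lemma stableKernel1_eq_integral_cos (hν : 0 < ν) (hα : 0 < α) (hs : 0 < s) :
    stableKernel1 ν α s x = π⁻¹ * ∫ z in Ioi 0, cos (x * z) * exp (-(s * ν) * z ^ α) := by
  have hint : Integrable fun z : ℝ => Complex.exp (-(Complex.I * (x * z : ℝ))) *
      Complex.exp (-((s * ν * |z| ^ α : ℝ) : ℂ)) := by
    refine Integrable.bdd_mul (c := 1) ?_ (by fun_prop) (.of_forall fun z => ?_)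
    · simpa using (integrable_exp_neg_mul_abs_rpow (mul_pos hs hν) hα).ofReal (𝕜 := ℂ)
    · simp [Complex.norm_exp]
  have hre (z : ℝ) : (Complex.exp (-(Complex.I * (x * z : ℝ))) *
      Complex.exp (-((s * ν * |z| ^ α : ℝ) : ℂ))).re
        = cos (x * |z|) * exp (-(s * ν) * |z| ^ α) := by
    have hcos : cos (x * |z|) = cos (x * z) := by
      rcases abs_choice z with h | h <;> simp [h]
    rw [hcos, ← Complex.ofReal_neg, ← Complex.ofReal_exp, Complex.re_mul_ofReal, Complex.exp_re]
    simp
  rw [stableKernel1, ← Complex.reCLM_apply, ← Complex.reCLM.integral_comp_comm hint]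
  simp only [Complex.reCLM_apply, hre]
  rw [integral_comp_abs (f := fun z => cos (x * z) * exp (-(s * ν) * z ^ α))]
  field_simp

lemma continuous_stableKernel1 (hν : 0 < ν) (hα : 0 < α) (hs : 0 < s) :
    Continuous (stableKernel1 ν α s) := by
  simp only [funext fun x => stableKernel1_eq_integral_cos (x := x) hν hα hs]
  refine continuous_const.mul (continuous_of_dominated
    (bound := fun z => exp (-(s * ν) * z ^ α)) (fun x => ?_) (fun x => .of_forall fun z => ?_)
    (integrableOn_exp_neg_mul_rpow (mul_pos hs hν) hα) (.of_forall fun z => by fun_prop))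
  · exact Measurable.aestronglyMeasurable (by fun_prop)
  · rw [norm_mul, norm_of_nonneg (exp_pos _).le]
    exact mul_le_of_le_one_left (exp_pos _).le (abs_cos_le_one _)

lemma stableKernel1_le (hν : 0 < ν) (hα : 0 < α) (hα1 : α ≤ 1) (hs : 0 < s) (hx : 0 < x) :
    stableKernel1 ν α s x ≤ ν * π ^ α / (α + 1) * s * x ^ (-(α + 1)) := by
  rw [stableKernel1_eq_integral_cos hν hα hs]
  calc π⁻¹ * ∫ z in Ioi 0, cos (x * z) * exp (-(s * ν) * z ^ α)
      ≤ π⁻¹ * (s * ν * ((π / x) ^ (α + 1) / (α + 1))) := by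
        gcongr
        exact integral_cos_mul_exp_neg_mul_rpow_le (mul_pos hs hν) hα hα1 hx
    _ = ν * π ^ α / (α + 1) * s * x ^ (-(α + 1)) := by
        rw [div_rpow pi_pos.le hx.le, rpow_neg hx.le, rpow_add_one pi_ne_zero]
        field_simp

lemma integral_rpow_neg_add_one_le {b : ℝ} (hα : 0 < α) (hδ : 0 < δ) (hb : δ ≤ b) :
    ∫ u in δ..b, u ^ (-(α + 1)) ≤ δ ^ (-α) / α := by
  have hzero : (0 : ℝ) ∉ uIcc δ b := notMem_uIcc_of_lt hδ (hδ.trans_le hb)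
  calc ∫ u in δ..b, u ^ (-(α + 1)) = (δ ^ (-α) - b ^ (-α)) / α := by
        rw [integral_rpow (Or.inr ⟨by linarith, hzero⟩), show -(α + 1) + 1 = -α by ring, div_neg,
          ← neg_div, neg_sub]
    _ ≤ δ ^ (-α) / α := by
        gcongr
        exact sub_le_self _ (rpow_nonneg (hδ.le.trans hb) _)

lemma setIntegral_stableKernel1_le (hν : 0 < ν) (hα : 0 < α) (hα1 : α ≤ 1) (hs : 0 < s)
    (hδ : 0 < δ) :
    ∫ y in Ioo (0 : ℝ) 1, stableKernel1 ν α s (1 + δ - y)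
      ≤ ν * π ^ α / (α + 1) * s * (δ ^ (-α) / α) := by
  have hpos (y : ℝ) (hy : y ∈ Icc (0 : ℝ) 1) : 0 < 1 + δ - y := by linarith [hy.2]
  have hkernel : Continuous fun y => stableKernel1 ν α s (1 + δ - y) :=
    (continuous_stableKernel1 hν hα hs).comp (by fun_prop)
  have hpower : ContinuousOn (fun y => ν * π ^ α / (α + 1) * s * (1 + δ - y) ^ (-(α + 1)))
      (uIcc 0 1) := by
    rw [uIcc_of_le zero_le_one]
    exact continuousOn_const.mul
      (ContinuousOn.rpow_const (by fun_prop) fun y hy => Or.inl (hpos y hy).ne')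
  rw [← integral_Ioc_eq_integral_Ioo, ← intervalIntegral.integral_of_le zero_le_one]
  calc ∫ y in 0..1, stableKernel1 ν α s (1 + δ - y)
      ≤ ∫ y in 0..1, ν * π ^ α / (α + 1) * s * (1 + δ - y) ^ (-(α + 1)) :=
        intervalIntegral.integral_mono_on zero_le_one (hkernel.intervalIntegrable _ _)
          hpower.intervalIntegrable fun y hy => stableKernel1_le hν hα hα1 hs (hpos y hy)
    _ = ν * π ^ α / (α + 1) * s * ∫ u in δ..1 + δ, u ^ (-(α + 1)) := by
        rw [intervalIntegral.integral_const_mul,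
          intervalIntegral.integral_comp_sub_left (fun u : ℝ => u ^ (-(α + 1))), sub_zero,
          add_sub_cancel_left]
    _ ≤ ν * π ^ α / (α + 1) * s * (δ ^ (-α) / α) := by
        gcongr
        exact integral_rpow_neg_add_one_le hα hδ (by linarith)

end StableKernel

theorem remark_failure_alpha_lt_one_general {ν α t : ℝ} (hν : 0 < ν) (hα : 0 < α) (hα1 : α ≤ 1)
    (ht : 0 < t) :
    ∃ c > (0 : ℝ), ∀ m : ℝ, 0 < m → ∀ s : ℝ, 0 < s → s ≤ t / m →
      (∫ y in Ioo (0 : ℝ) 1, stableKernel1 ν α s (1 + 1 / m - y)) ≤ c * m ^ (α - 1) := by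
  refine ⟨ν * π ^ α / (α + 1) * t / α, by positivity, fun m hm s hs hst => ?_⟩
  calc ∫ y in Ioo (0 : ℝ) 1, stableKernel1 ν α s (1 + 1 / m - y)
      ≤ ν * π ^ α / (α + 1) * s * ((1 / m) ^ (-α) / α) :=
        setIntegral_stableKernel1_le hν hα hα1 hs (by positivity)
    _ ≤ ν * π ^ α / (α + 1) * (t / m) * ((1 / m) ^ (-α) / α) := by gcongr
    _ = ν * π ^ α / (α + 1) * t / α * m ^ (α - 1) := by
        rw [one_div, inv_rpow hm.le, rpow_neg hm.le, inv_inv, rpow_sub_one hm.ne']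
        field_simp

/-- Remark 5.2: in dimension one with `α ∈ (0,1)` and `u₀ = 1_{[0,1]}`, for `x = 1 + 1/m`
and `t/(2m) ≤ s ≤ t/m` one has `∫₀¹ p_s(x-y) dy ≤ c m^{α-1}`, which tends to `0` as
`m → ∞`; hence the lower bound method fails for `α < 1`. -/
theorem remark_failure_alpha_lt_one (ν α : ℝ) (hν : 0 < ν) (hα : 0 < α) (hα1 : α < 1)
    (t : ℝ) (ht : 0 < t) :
    ∃ c > (0 : ℝ), ∀ m : ℕ, 2 ≤ m → ∀ s : ℝ, t / (2 * m) ≤ s → s ≤ t / m →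
      (∫ y in Set.Ioo (0 : ℝ) 1, stableKernel1 ν α s (1 + 1 / m - y))
        ≤ c * (m : ℝ) ^ (α - 1) := by
  obtain ⟨c, hc, hle⟩ := remark_failure_alpha_lt_one_general hν hα hα1.le ht
  have hpos {m : ℕ} (hm : 2 ≤ m) : (0 : ℝ) < m := by exact_mod_cast two_pos.trans_le hm
  exact ⟨c, hc, fun m hm s hs => hle m (hpos hm) s
    ((div_pos ht (mul_pos two_pos (hpos hm))).trans_le hs)⟩
end
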